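/- Let m ≥ 0 be an integer. There is a constant C_m > 0 depending only on m such that for every F ∈ H²(T_Σ), the restriction R□^m F : Π⁺×Π⁺ → ℂ, (z₁,z₂) ↦ (□^m F)(z₁, z₂, 0), belongs to the weighted Bergman space A²_{(2m−1/2, 2m−1/2)}(Π⁺×Π⁺) and ‖R□^m F‖²_{A²_{(2m−1/2,2m−1/2)}(Π⁺×Π⁺)} ≤ C_m ‖F‖²_{H²(T_Σ)}. -/

import Mathlib

open MeasureTheory Set
open scoped ENNReal NNReal

noncomputable section

/-- The spherical cone `Σ = {y ∈ ℝ³ : y₁y₂ − y₃² > 0, y₁ > 0}`. -/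
def Sigma3 : Set (Fin 3 → ℝ) :=
  {y | 0 < y 0 * y 1 - (y 2) ^ 2 ∧ 0 < y 0}

/-- The tube domain `T_Σ = ℝ³ + iΣ ⊂ ℂ³`. -/
def TSigma : Set (Fin 3 → ℂ) :=
  {z | (fun i => (z i).im) ∈ Sigma3}

/-- Square of the Hardy space `H²(T_Σ)` norm. -/
def hardyNormSqSigma (F : (Fin 3 → ℂ) → ℂ) : ℝ≥0∞ :=
  ⨆ y ∈ Sigma3,
    ∫⁻ x : Fin 3 → ℝ, (‖F (fun i => (x i : ℂ) + (y i : ℂ) * Complex.I)‖₊ : ℝ≥0∞) ^ 2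

/-- Partial derivative in the `i`-th complex coordinate. -/
def pd (i : Fin 3) (F : (Fin 3 → ℂ) → ℂ) : (Fin 3 → ℂ) → ℂ :=
  fun z => fderiv ℂ F z (Pi.single i 1)

/-- The box operator `□ = −4 ∂²/∂z₁∂z₂ + ∂²/∂z₃²` associated to the spherical cone. -/
def BoxS (F : (Fin 3 → ℂ) → ℂ) : (Fin 3 → ℂ) → ℂ :=
  fun z => -4 * pd 0 (pd 1 F) z + pd 2 (pd 2 F) z

/-- The upper half-plane `Π⁺`. -/
def UHP : Set ℂ := {z : ℂ | 0 < z.im}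

/-- The weighted measure `dV_α(x+iy) = y^α dx dy` on the upper half-plane. -/
def Vm (α : ℝ) : Measure ℂ :=
  (volume.restrict UHP).withDensity fun z => ENNReal.ofReal (z.im ^ α)

/-- Square of the weighted Bergman space `A²_{(α₁,α₂)}(Π⁺×Π⁺)` norm:
`‖G‖² = ∫_{Π⁺×Π⁺} |G(x₁+iy₁,x₂+iy₂)|² y₁^{α₁} y₂^{α₂} dx₁dx₂dy₁dy₂`. -/
def bergNormSqProd (α₁ α₂ : ℝ) (G : ℂ × ℂ → ℂ) : ℝ≥0∞ :=
  ∫⁻ z, (‖G z‖₊ : ℝ≥0∞) ^ 2 ∂((Vm α₁).prod (Vm α₂))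

open scoped FourierTransform SchwartzMap ContDiff

theorem planch {E : Type*} [NormedAddCommGroup E] [MeasurableSpace E] [BorelSpace E]
   [InnerProductSpace ℝ E] [FiniteDimensional ℝ E] (g : E → ℂ) (hg : Integrable g) 
   (h2 : MemLp g 2) : eLpNorm (𝓕 g) 2 = eLpNorm g 2 := by
  have key : ∀ᵐ x : E, 𝓕 g x = (𝓕 (h2.toLp g) : Lp (α := E) ℂ 2 volume) x := by
    apply ae_eq_of_integral_contDiff_smul_eq
    · apply Continuous.locallyIntegrable
      exact VectorFourier.fourierIntegral_continuous Real.continuous_fourierChar continuous_inner hg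
    · exact (Lp.memLp _).locallyIntegrable (by norm_num)
    · intro u hu hc
      let us : 𝓢(E, ℂ) := (hc.comp_left (g := Complex.ofReal) rfl).toSchwartzMap (Complex.ofRealCLM.contDiff.comp hu)
      have h := MeasureTheory.Lp.fourier_toTemperedDistribution_eq (h2.toLp g)
      have h' := DFunLike.congr_fun h us
      rw [TemperedDistribution.fourier_apply] at h'
      simp only [Lp.toTemperedDistribution_apply] at h'
      have e1 : ∫ x, u x • (𝓕 (h2.toLp g) : Lp (α := E) ℂ 2 volume) x = ∫ x, us x • (𝓕 (h2.toLp g) : Lp (α := E) ℂ 2 volume) x := by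
        congr 1
      rw [e1, ← h']
      have e2 := VectorFourier.integral_fourierIntegral_smul_eq_flip (e := Real.fourierChar) (μ := (volume : Measure E)) (ν := (volume : Measure E)) (L := innerₗ E) (f := (us : E → ℂ)) (g := g) Real.continuous_fourierChar continuous_inner us.integrable hg
      rw [flip_innerₗ] at e2
      calc _ = ∫ x, us x • 𝓕 g x := by congr 1
        _ = ∫ x, 𝓕 us x • g x := e2.symm
        _ = _ := by
          apply integral_congr_ae
          filter_upwards [h2.coeFn_toLp] with x hx
          rw [hx]
  have h1 : eLpNorm (𝓕 g) 2 = eLpNorm (𝓕 (h2.toLp g) : Lp (α := E) ℂ 2 volume) 2 := eLpNorm_congr_ae key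
  have h3 : eLpNorm g 2 = eLpNorm (h2.toLp g) 2 := (eLpNorm_congr_ae h2.coeFn_toLp).symm
  rw [h1, h3, ← Lp.enorm_def, ← Lp.enorm_def, ← ofReal_norm, ← ofReal_norm, Lp.norm_fourier_eq]

theorem lint_sq {α : Type*} [MeasurableSpace α] (μ : Measure α) (g : α → ℂ) :
    ∫⁻ x, ‖g x‖ₑ ^ 2 ∂μ = eLpNorm g 2 μ ^ 2 := by
  rw [eLpNorm_eq_lintegral_rpow_enorm_toReal (by norm_num) (by norm_num)]
  rw [← ENNReal.rpow_natCast, ← ENNReal.rpow_mul]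
  simp

theorem planch_le {n : ℕ} (g : (Fin n → ℝ) → ℂ) (hg : Integrable g) :
    ∫⁻ ξ : Fin n → ℝ, ‖∫ x : Fin n → ℝ, Complex.exp (-2 * Real.pi * Complex.I * (∑ i, (x i : ℂ) * ξ i)) * g x‖ₑ ^ 2 ≤ ∫⁻ x, ‖g x‖ₑ ^ 2 := by
  by_cases h2 : MemLp g 2
  swap
  · rw [lint_sq volume g]
    have : eLpNorm g 2 = ⊤ := by
      by_contra h
      exact h2 ⟨hg.1, lt_top_iff_ne_top.2 h⟩
    rw [this]; simp
  let G : EuclideanSpace ℝ (Fin n) → ℂ := fun x => g (WithLp.ofLp x)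
  have mp := PiLp.volume_preserving_ofLp (Fin n)
  have mp' := PiLp.volume_preserving_toLp (Fin n)
  have me : MeasurableEmbedding (@WithLp.ofLp 2 (Fin n → ℝ)) := (MeasurableEquiv.toLp 2 (Fin n → ℝ)).symm.measurableEmbedding
  have me' : MeasurableEmbedding (@WithLp.toLp 2 (Fin n → ℝ)) := (MeasurableEquiv.toLp 2 (Fin n → ℝ)).measurableEmbedding
  have hG : Integrable G := mp.integrable_comp_of_integrable hg
  have hG2 : MemLp G 2 := h2.comp_measurePreserving mp
  have := planch G hG hG2
  have h3 : ∫⁻ x, ‖𝓕 G x‖ₑ ^ 2 = ∫⁻ x, ‖G x‖ₑ ^ 2 := by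
    rw [lint_sq, lint_sq, this]
  rw [show ∫⁻ x, ‖G x‖ₑ ^ 2 = ∫⁻ x, ‖g x‖ₑ ^ 2 from mp.lintegral_comp_emb me (fun x => ‖g x‖ₑ ^ 2)] at h3
  rw [← h3]
  apply le_of_eq
  rw [← mp.lintegral_comp_emb me]
  congr 1; ext ξ
  congr 2
  rw [Real.fourier_eq', ← mp.integral_comp me]
  congr 1; ext x
  simp [G, PiLp.inner_apply]
  left; congr 1; rw [Finset.mul_sum, Finset.mul_sum, Finset.sum_mul, neg_inj]
  apply Finset.sum_congr rfl; intros; ring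

theorem finv {n : ℕ} (g : (Fin n → ℝ) → ℂ) (hg : Integrable g) (hc : Continuous g)
    (hi : Integrable (fun ξ : Fin n → ℝ => ∫ x : Fin n → ℝ, Complex.exp (-2 * Real.pi * Complex.I * (∑ i, (x i : ℂ) * ξ i)) * g x)) (x : Fin n → ℝ) :
    g x = ∫ ξ : Fin n → ℝ, Complex.exp (2 * Real.pi * Complex.I * (∑ i, (x i : ℂ) * ξ i)) * ∫ x : Fin n → ℝ, Complex.exp (-2 * Real.pi * Complex.I * (∑ i, (x i : ℂ) * ξ i)) * g x := by
  let G : EuclideanSpace ℝ (Fin n) → ℂ := fun x => g (WithLp.ofLp x)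
  have mp := PiLp.volume_preserving_ofLp (Fin n)
  have me : MeasurableEmbedding (@WithLp.ofLp 2 (Fin n → ℝ)) := (MeasurableEquiv.toLp 2 (Fin n → ℝ)).symm.measurableEmbedding
  have hG : Integrable G := mp.integrable_comp_of_integrable hg
  have hF : ∀ ξ, 𝓕 G ξ = ∫ x : Fin n → ℝ, Complex.exp (-2 * Real.pi * Complex.I * (∑ i, (x i : ℂ) * ξ i)) * g x := by
    intro ξ
    rw [Real.fourier_eq', ← mp.integral_comp me]
    congr 1; ext x
    simp [G, PiLp.inner_apply]
    left; congr 1; rw [Finset.mul_sum, Finset.mul_sum, Finset.sum_mul, neg_inj]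
    apply Finset.sum_congr rfl; intros; ring
  have hi' : Integrable (𝓕 G) := by
    have := mp.integrable_comp_of_integrable hi
    refine this.congr (ae_of_all _ fun ξ => ?_)
    rw [hF]; rfl
  have hGc : Continuous G := hc.comp (PiLp.continuous_ofLp 2 _)
  have := congrFun (hGc.fourierInv_fourier_eq hG hi') (WithLp.toLp 2 x)
  change _ = g x at this
  rw [← this, Real.fourierInv_eq', ← mp.integral_comp me]
  congr 1; ext ξ
  rw [hF]
  simp only [smul_eq_mul, PiLp.inner_apply]
  congr 2
  simp
  rw [Finset.mul_sum, Finset.mul_sum, Finset.sum_mul]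
  apply Finset.sum_congr rfl; intros; ring

/-! ### cone facts -/
theorem sig_add {a b : Fin 3 → ℝ} (ha : a ∈ Sigma3) (hb : b ∈ Sigma3) : a + b ∈ Sigma3 := by
  obtain ⟨ha1, ha0⟩ := ha
  obtain ⟨hb1, hb0⟩ := hb
  refine ⟨?_, by simp only [Pi.add_apply]; linarith⟩
  simp only [Pi.add_apply]
  have h1 : 0 < (a 0 * b 0) * (a 0 * b 1 + b 0 * a 1 - 2 * a 2 * b 2) := by
    have e1 : 0 < a 0 ^ 2 * (b 0 * b 1 - b 2 ^ 2) := by positivity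
    have e2 : 0 < b 0 ^ 2 * (a 0 * a 1 - a 2 ^ 2) := by positivity
    nlinarith [sq_nonneg (a 0 * b 2 - b 0 * a 2)]
  have h2 := (mul_pos_iff_of_pos_left (mul_pos ha0 hb0)).1 h1
  nlinarith

theorem sig_smul {a : Fin 3 → ℝ} (ha : a ∈ Sigma3) {t : ℝ} (ht : 0 < t) : t • a ∈ Sigma3 := by
  obtain ⟨ha1, ha0⟩ := ha
  refine ⟨?_, by simp only [Pi.smul_apply, smul_eq_mul]; positivity⟩
  simp only [Pi.smul_apply, smul_eq_mul]
  have : 0 < t ^ 2 * (a 0 * a 1 - a 2 ^ 2) := by positivity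
  nlinarith

theorem sig_pos1 {a : Fin 3 → ℝ} (ha : a ∈ Sigma3) : 0 < a 1 := by
  obtain ⟨ha1, ha0⟩ := ha
  by_contra h
  push Not at h
  nlinarith [sq_nonneg (a 2)]

theorem sig_open : IsOpen Sigma3 := by
  apply IsOpen.inter
  · exact isOpen_lt (f := fun _ : Fin 3 → ℝ => (0:ℝ)) (g := fun y : Fin 3 → ℝ => y 0 * y 1 - y 2 ^ 2) continuous_const (by fun_prop)
  · exact isOpen_lt (f := fun _ : Fin 3 → ℝ => (0:ℝ)) (g := fun y : Fin 3 → ℝ => y 0) continuous_const (by fun_prop)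

theorem tsig_open : IsOpen TSigma := by
  apply sig_open.preimage
  fun_prop

def e00 : Fin 3 → ℝ := ![1, 1, 0]

theorem e00_mem : e00 ∈ Sigma3 := by
  constructor <;> simp [e00]

/-- shrinking -/
theorem sig_shrink {y : Fin 3 → ℝ} (hy : y ∈ Sigma3) : ∃ s : ℝ, 0 < s ∧ y - s • e00 ∈ Sigma3 := by
  have hc : ContinuousAt (fun s : ℝ => y - s • e00) 0 := by fun_prop
  have : ∀ᶠ s : ℝ in nhds 0, y - s • e00 ∈ Sigma3 := by
    apply hc.eventually_mem
    apply sig_open.mem_nhds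
    simpa using hy
  have h2 : ∀ᶠ s : ℝ in nhdsWithin 0 (Ioi 0), y - s • e00 ∈ Sigma3 := this.filter_mono nhdsWithin_le_nhds
  obtain ⟨s, hs, hs'⟩ := (h2.and self_mem_nhdsWithin).exists
  exact ⟨s, hs', hs⟩

/-- dual cone -/
def dualC : Set (Fin 3 → ℝ) := {ξ | ∀ y ∈ Sigma3, 0 ≤ ∑ i, y i * ξ i}

theorem dual_quad {ξ : Fin 3 → ℝ} (h : ξ ∈ dualC) (p q : ℝ) :
    0 ≤ p ^ 2 * ξ 0 + q ^ 2 * ξ 1 + p * q * ξ 2 := by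
  have h1 : ∀ ε : ℝ, 0 < ε → 0 ≤ (p ^ 2 + ε) * ξ 0 + (q ^ 2 + ε) * ξ 1 + p * q * ξ 2 := by
    intro ε hε
    have := h ![p ^ 2 + ε, q ^ 2 + ε, p * q] ⟨by simp; nlinarith [sq_nonneg p, sq_nonneg q, mul_pos hε hε, mul_nonneg hε.le (sq_nonneg p), mul_nonneg hε.le (sq_nonneg q)], by simp; positivity⟩
    simpa [Fin.sum_univ_three] using this
  have h2 : Filter.Tendsto (fun ε : ℝ => (p ^ 2 + ε) * ξ 0 + (q ^ 2 + ε) * ξ 1 + p * q * ξ 2) (nhdsWithin 0 (Ioi 0)) (nhds ((p ^ 2 + 0) * ξ 0 + (q ^ 2 + 0) * ξ 1 + p * q * ξ 2)) := by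
    apply Filter.Tendsto.mono_left _ nhdsWithin_le_nhds
    apply Continuous.tendsto
    fun_prop
  have := ge_of_tendsto h2 (by filter_upwards [self_mem_nhdsWithin] with ε hε using h1 ε hε)
  simpa using this

theorem dual0 {ξ : Fin 3 → ℝ} (h : ξ ∈ dualC) : 0 ≤ ξ 0 := by simpa using dual_quad h 1 0
theorem dual1 {ξ : Fin 3 → ℝ} (h : ξ ∈ dualC) : 0 ≤ ξ 1 := by simpa using dual_quad h 0 1
theorem dual2 {ξ : Fin 3 → ℝ} (h : ξ ∈ dualC) : ξ 2 ^ 2 ≤ 4 * ξ 0 * ξ 1 := by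
  have := discrim_le_zero (a := ξ 0) (b := ξ 2) (c := ξ 1) (fun p => by
    have := dual_quad h p 1
    nlinarith)
  rw [discrim] at this; linarith

theorem dual_abs {ξ : Fin 3 → ℝ} (h : ξ ∈ dualC) : ∑ i, |ξ i| ≤ 4 * (ξ 0 + ξ 1) := by
  rw [Fin.sum_univ_three, abs_of_nonneg (dual0 h), abs_of_nonneg (dual1 h)]
  have h0 := dual0 h
  have h1 := dual1 h
  have : |ξ 2| ≤ 2 * (ξ 0 + ξ 1) := by
    apply abs_le_of_sq_le_sq _ (by positivity)
    nlinarith [dual2 h, sq_nonneg (ξ 0 - ξ 1)]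
  linarith

theorem e00_dot (ξ : Fin 3 → ℝ) : ∑ i, e00 i * ξ i = ξ 0 + ξ 1 := by
  simp [Fin.sum_univ_three, e00]

/-! ### Laplace transforms -/
def ker (z : Fin 3 → ℂ) (ξ : Fin 3 → ℝ) : ℂ := Complex.exp (2 * Real.pi * Complex.I * ∑ i, z i * ξ i)

theorem norm_ker (z : Fin 3 → ℂ) (ξ : Fin 3 → ℝ) :
    ‖ker z ξ‖ = Real.exp (-(2 * Real.pi * ∑ i, (z i).im * ξ i)) := by
  rw [ker, Complex.norm_exp]
  congr 1
  simp [Fin.sum_univ_three]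

theorem ker_cont : Continuous (fun p : (Fin 3 → ℂ) × (Fin 3 → ℝ) => ker p.1 p.2) := by
  unfold ker; fun_prop

def Lap (f : (Fin 3 → ℝ) → ℂ) (z : Fin 3 → ℂ) : ℂ := ∫ ξ, ker z ξ * f ξ

structure Adm (f : (Fin 3 → ℝ) → ℂ) : Prop where
  meas : Measurable f
  supp : ∀ ξ, ξ ∉ dualC → f ξ = 0
  int : ∀ z ∈ TSigma, Integrable (fun ξ => ker z ξ * f ξ)

theorem ker_le {z w : Fin 3 → ℂ} (h : (fun i => (w i).im - (z i).im) ∈ Sigma3) {ξ : Fin 3 → ℝ} (hξ : ξ ∈ dualC) :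
    ‖ker w ξ‖ ≤ ‖ker z ξ‖ := by
  rw [norm_ker, norm_ker]
  apply Real.exp_le_exp.2
  have := hξ _ h
  simp only [sub_mul, Finset.sum_sub_distrib] at this
  have hp := Real.pi_pos
  nlinarith

theorem ker_shift (z : Fin 3 → ℂ) (s : ℝ) (ξ : Fin 3 → ℝ) :
    ‖ker z ξ‖ = Real.exp (-(2 * Real.pi * s * (ξ 0 + ξ 1))) * ‖ker (fun i => z i - s * e00 i * Complex.I) ξ‖ := by
  rw [norm_ker, norm_ker, ← Real.exp_add]
  congr 1
  simp [Fin.sum_univ_three, e00]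
  ring

theorem tsig_shrink {z : Fin 3 → ℂ} (hz : z ∈ TSigma) : ∃ s : ℝ, 0 < s ∧ (fun i => z i - s * e00 i * Complex.I) ∈ TSigma := by
  obtain ⟨s, hs, h⟩ := sig_shrink (y := fun i => (z i).im) hz
  refine ⟨s, hs, ?_⟩
  have : (fun i => (z i - s * e00 i * Complex.I).im) = (fun i => (z i).im) - s • e00 := by
    ext i; simp
  change (fun i => (z i - s * e00 i * Complex.I).im) ∈ Sigma3
  rw [this]; exact h

theorem xi_ker_le {z : Fin 3 → ℂ} {s : ℝ} (hs : 0 < s) {ξ : Fin 3 → ℝ} (hξ : ξ ∈ dualC) (i : Fin 3) :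
    |ξ i| * ‖ker z ξ‖ ≤ 4 / (2 * Real.pi * s) * ‖ker (fun i => z i - s * e00 i * Complex.I) ξ‖ := by
  rw [ker_shift z s ξ, ← mul_assoc]
  gcongr
  have h1 : |ξ i| ≤ 4 * (ξ 0 + ξ 1) := (Finset.single_le_sum (f := fun i => |ξ i|) (fun i _ => abs_nonneg _) (Finset.mem_univ i)).trans (dual_abs hξ)
  set u := ξ 0 + ξ 1
  have hp : 0 < 2 * Real.pi * s := by positivity
  have h2 := Real.add_one_le_exp (2 * Real.pi * s * u)
  rw [Real.exp_neg, ← div_eq_mul_inv, div_le_div_iff₀ (Real.exp_pos _) hp]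
  nlinarith

theorem Adm.xi {f : (Fin 3 → ℝ) → ℂ} (hf : Adm f) (c : ℂ) (i : Fin 3) : Adm (fun ξ => c * ξ i * f ξ) := by
  have := hf.meas
  refine ⟨by fun_prop, fun ξ h => by simp [hf.supp ξ h], fun z hz => ?_⟩
  obtain ⟨s, hs, h⟩ := tsig_shrink hz
  have hI := (hf.int _ h).norm.const_mul (‖c‖ * (4 / (2 * Real.pi * s)))
  refine hI.mono' ?_ (ae_of_all _ fun ξ => ?_)
  · apply Measurable.aestronglyMeasurable
    have := (ker_cont.comp (Continuous.prodMk_right z)).measurable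
    simp only [Function.comp_def] at this
    fun_prop
  · by_cases hξ : ξ ∈ dualC
    · simp only [norm_mul, Complex.norm_real, Real.norm_eq_abs]
      have := xi_ker_le hs hξ i (z := z)
      calc _ = ‖c‖ * (|ξ i| * ‖ker z ξ‖) * ‖f ξ‖ := by ring
        _ ≤ ‖c‖ * (4 / (2 * Real.pi * s) * ‖ker (fun i => z i - s * e00 i * Complex.I) ξ‖) * ‖f ξ‖ := by gcongr
        _ = _ := by ring
    · simp [hf.supp ξ hξ]

theorem Adm.add {f g : (Fin 3 → ℝ) → ℂ} (hf : Adm f) (hg : Adm g) : Adm (fun ξ => f ξ + g ξ) := by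
  refine ⟨hf.meas.add hg.meas, fun ξ h => by simp [hf.supp ξ h, hg.supp ξ h], fun z hz => ?_⟩
  simp only [mul_add]
  exact (hf.int z hz).add (hg.int z hz)

theorem Lap_add {f g : (Fin 3 → ℝ) → ℂ} (hf : Adm f) (hg : Adm g) {z : Fin 3 → ℂ} (hz : z ∈ TSigma) :
    Lap (fun ξ => f ξ + g ξ) z = Lap f z + Lap g z := by
  simp only [Lap, mul_add]
  exact integral_add (hf.int z hz) (hg.int z hz)

theorem Lap_smul (c : ℂ) (f : (Fin 3 → ℝ) → ℂ) (z : Fin 3 → ℂ) :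
    Lap (fun ξ => c * f ξ) z = c * Lap f z := by
  simp only [Lap]
  rw [← integral_const_mul]
  congr 1; ext ξ; ring

def DK (ξ : Fin 3 → ℝ) : (Fin 3 → ℂ) →L[ℂ] ℂ :=
  ∑ i, (2 * Real.pi * Complex.I * ξ i) • ContinuousLinearMap.proj (R := ℂ) (φ := fun _ : Fin 3 => ℂ) i

theorem ker_hasFDerivAt (z : Fin 3 → ℂ) (ξ : Fin 3 → ℝ) :
    HasFDerivAt (fun z => ker z ξ) (ker z ξ • DK ξ) z := by
  have h1 : HasFDerivAt (fun z : Fin 3 → ℂ => DK ξ z) (DK ξ) z := (DK ξ).hasFDerivAt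
  have := h1.cexp
  have he : ∀ z, ker z ξ = Complex.exp (DK ξ z) := by
    intro z
    simp only [ker, DK]
    congr 1
    simp [Fin.sum_univ_three]
    ring
  simp_rw [he]
  exact this

theorem DK_norm (ξ : Fin 3 → ℝ) : ‖DK ξ‖ ≤ 2 * Real.pi * ∑ i, |ξ i| := by
  rw [DK, Finset.mul_sum]
  refine (norm_sum_le _ _).trans (Finset.sum_le_sum fun i _ => ?_)
  rw [norm_smul]
  have h1 : ‖(ContinuousLinearMap.proj (R := ℂ) (φ := fun _ : Fin 3 => ℂ) i)‖ ≤ 1 :=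
    ContinuousLinearMap.opNorm_le_bound _ zero_le_one (fun x => by simpa using norm_le_pi_norm x i)
  calc _ ≤ ‖2 * (Real.pi : ℂ) * Complex.I * ξ i‖ * 1 := by gcongr
    _ = _ := by simp [abs_of_pos Real.pi_pos]

theorem Lap_hasFDerivAt {f : (Fin 3 → ℝ) → ℂ} (hf : Adm f) {z : Fin 3 → ℂ} (hz : z ∈ TSigma) :
    HasFDerivAt (Lap f) (∑ i, Lap (fun ξ => 2 * Real.pi * Complex.I * ξ i * f ξ) z • ContinuousLinearMap.proj (R := ℂ) (φ := fun _ : Fin 3 => ℂ) i) z := by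
  obtain ⟨s, hs, hw⟩ := tsig_shrink hz
  set w : Fin 3 → ℂ := fun i => z i - s * e00 i * Complex.I with hwd
  have hm : ∀ z : Fin 3 → ℂ, AEStronglyMeasurable (fun ξ => ker z ξ * f ξ) volume := fun z => by
    apply Measurable.aestronglyMeasurable
    have := (ker_cont.comp (Continuous.prodMk_right z)).measurable
    simp only [Function.comp_def] at this
    have := hf.meas
    fun_prop
  -- neighbourhood
  have hnb : {v : Fin 3 → ℂ | (fun i => (v i).im - (w i).im) ∈ Sigma3} ∈ nhds z := by
    apply IsOpen.mem_nhds
    · apply sig_open.preimage; fun_prop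
    · change (fun i => (z i).im - (w i).im) ∈ Sigma3
      convert sig_smul e00_mem hs using 1
      ext i; simp [hwd]
  have key := hasFDerivAt_integral_of_dominated_of_fderiv_le (𝕜 := ℂ) (μ := (volume : Measure (Fin 3 → ℝ)))
    (F := fun z ξ => ker z ξ * f ξ) (F' := fun z ξ => (ker z ξ * f ξ) • DK ξ) (x₀ := z) 
    (bound := fun ξ => ∑ i, ‖ker w ξ * (2 * Real.pi * ξ i * f ξ)‖) hnb
    (Filter.Eventually.of_forall hm) (hf.int z hz) ?_ ?_ ?_ ?_
  · refine key.congr_fderiv ?_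
    have : ∀ i, Integrable (fun ξ => (ker z ξ * (2 * Real.pi * Complex.I * ξ i * f ξ)) • ContinuousLinearMap.proj (R := ℂ) (φ := fun _ : Fin 3 => ℂ) i) := by
      intro i
      exact ((hf.xi (2 * Real.pi * Complex.I) i).int z hz).smul_const _
    have e1 : ∀ i : Fin 3, Lap (fun ξ => 2 * Real.pi * Complex.I * ξ i * f ξ) z • ContinuousLinearMap.proj (R := ℂ) (φ := fun _ : Fin 3 => ℂ) i = ∫ ξ, (ker z ξ * (2 * Real.pi * Complex.I * ξ i * f ξ)) • ContinuousLinearMap.proj (R := ℂ) (φ := fun _ : Fin 3 => ℂ) i :=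
      fun i => (integral_smul_const (μ := (volume : Measure (Fin 3 → ℝ))) (fun ξ => ker z ξ * (2 * Real.pi * Complex.I * ξ i * f ξ)) (ContinuousLinearMap.proj (R := ℂ) (φ := fun _ : Fin 3 => ℂ) i)).symm
    simp only [e1]
    rw [← integral_finsetSum _ (fun i _ => this i)]
    congr 1; ext1 ξ
    rw [DK, Finset.smul_sum]
    apply Finset.sum_congr rfl; intro i _
    rw [smul_smul]
    congr 1; ring
  · apply (hm z).smul
    apply Continuous.aestronglyMeasurable
    unfold DK; fun_prop
  · refine ae_of_all _ fun ξ v hv => ?_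
    by_cases hξ : ξ ∈ dualC
    · have h1 : ‖ker v ξ‖ ≤ ‖ker w ξ‖ := ker_le hv hξ
      rw [norm_smul, norm_mul]
      calc _ ≤ ‖ker w ξ‖ * ‖f ξ‖ * (2 * Real.pi * ∑ i, |ξ i|) := by
            gcongr
            exact DK_norm ξ
        _ = _ := by
          rw [Finset.mul_sum, Finset.mul_sum]
          apply Finset.sum_congr rfl; intro i _
          simp [abs_of_pos Real.pi_pos]; ring
    · simp [hf.supp ξ hξ]
  · apply integrable_finsetSum
    intro i _
    have := ((hf.xi (2 * Real.pi) i).int w hw).norm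
    exact this
  · refine ae_of_all _ fun ξ v _ => ?_
    have := (ker_hasFDerivAt v ξ).mul_const (f ξ)
    refine this.congr_fderiv ?_
    rw [smul_smul, mul_comm]

theorem pd_congr {F G : (Fin 3 → ℂ) → ℂ} (h : EqOn F G TSigma) (i : Fin 3) : EqOn (pd i F) (pd i G) TSigma := by
  intro z hz
  simp only [pd]
  rw [Filter.EventuallyEq.fderiv_eq (h.eventuallyEq_of_mem (tsig_open.mem_nhds hz))]

theorem pd_Lap {f : (Fin 3 → ℝ) → ℂ} (hf : Adm f) (i : Fin 3) : EqOn (pd i (Lap f)) (Lap (fun ξ => 2 * Real.pi * Complex.I * ξ i * f ξ)) TSigma := by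
  intro z hz
  simp only [pd]
  rw [(Lap_hasFDerivAt hf hz).fderiv]
  simp [Pi.single_apply]

def qf (ξ : Fin 3 → ℝ) : ℝ := 4 * Real.pi ^ 2 * (4 * ξ 0 * ξ 1 - ξ 2 ^ 2)

theorem box_Lap {f : (Fin 3 → ℝ) → ℂ} (hf : Adm f) : Adm (fun ξ => qf ξ * f ξ) ∧
    ∀ F, EqOn F (Lap f) TSigma → EqOn (BoxS F) (Lap (fun ξ => qf ξ * f ξ)) TSigma := by
  set c : ℂ := 2 * Real.pi * Complex.I with hc
  have a1 := hf.xi c 1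
  have a01 := a1.xi (-4 * c) 0
  have b01 := a1.xi c 0
  have a2 := hf.xi c 2
  have a22 := a2.xi c 2
  have hcc : c * c = -(4 * Real.pi ^ 2 : ℝ) := by
    rw [hc]; push_cast; ring_nf; simp
  have he : (fun ξ : Fin 3 → ℝ => (qf ξ : ℂ) * f ξ) = fun ξ => (-4 * c * ξ 0 * (c * ξ 1 * f ξ)) + (c * ξ 2 * (c * ξ 2 * f ξ)) := by
    ext ξ
    rw [show (-4 * c * ξ 0 * (c * ξ 1 * f ξ)) + (c * ξ 2 * (c * ξ 2 * f ξ)) = (c * c) * (-4 * ξ 0 * ξ 1 + ξ 2 ^ 2) * f ξ by ring, hcc, qf]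
    push_cast; ring
  rw [he]
  refine ⟨a01.add a22, fun F hF z hz => ?_⟩
  rw [Lap_add a01 a22 hz, BoxS]
  have h1 : pd 0 (pd 1 F) z = Lap (fun ξ => c * ξ 0 * (c * ξ 1 * f ξ)) z := by
    rw [pd_congr ((pd_congr hF 1).trans (pd_Lap hf 1)) 0 hz]
    exact pd_Lap a1 0 hz
  have h2 : pd 2 (pd 2 F) z = Lap (fun ξ => c * ξ 2 * (c * ξ 2 * f ξ)) z := by
    rw [pd_congr ((pd_congr hF 2).trans (pd_Lap hf 2)) 2 hz]
    exact pd_Lap a2 2 hz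
  rw [h1, h2, ← Lap_smul]
  simp only [mul_assoc]

theorem box_iter_Lap {f : (Fin 3 → ℝ) → ℂ} (hf : Adm f) {F : (Fin 3 → ℂ) → ℂ} (hF : EqOn F (Lap f) TSigma) (m : ℕ) :
    Adm (fun ξ => (qf ξ : ℂ) ^ m * f ξ) ∧ EqOn (BoxS^[m] F) (Lap (fun ξ => (qf ξ : ℂ) ^ m * f ξ)) TSigma := by
  induction m with
  | zero => simpa using ⟨hf, hF⟩
  | succ k ih =>
    have := box_Lap ih.1
    simp only [← mul_assoc, ← pow_succ'] at this
    rw [Function.iterate_succ_apply']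
    exact ⟨this.1, this.2 _ ih.2⟩

theorem Lap_contDiffOn {f : (Fin 3 → ℝ) → ℂ} (hf : Adm f) : ContDiffOn ℂ ∞ (Lap f) TSigma := by
  rw [contDiffOn_infty]
  intro n
  induction n generalizing f with
  | zero =>
    exact_mod_cast contDiffOn_zero.2 fun z hz => (Lap_hasFDerivAt hf hz).continuousAt.continuousWithinAt
  | succ n ih =>
    push_cast
    rw [contDiffOn_succ_iff_fderiv_of_isOpen tsig_open]
    refine ⟨fun z hz => (Lap_hasFDerivAt hf hz).differentiableAt.differentiableWithinAt, by simp, ?_⟩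
    have : EqOn (fderiv ℂ (Lap f)) (fun z => ∑ i, Lap (fun ξ => 2 * Real.pi * Complex.I * ξ i * f ξ) z • ContinuousLinearMap.proj (R := ℂ) (φ := fun _ : Fin 3 => ℂ) i) TSigma :=
      fun z hz => (Lap_hasFDerivAt hf hz).fderiv
    refine ContDiffOn.congr ?_ this
    apply ContDiffOn.sum
    intro i _
    exact (ih (hf.xi _ i)).smul contDiffOn_const

def cz (x y : Fin 3 → ℝ) : Fin 3 → ℂ := fun i => (x i : ℂ) + (y i : ℂ) * Complex.I

theorem cz_mem {x y : Fin 3 → ℝ} (hy : y ∈ Sigma3) : cz x y ∈ TSigma := by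
  change (fun i => (cz x y i).im) ∈ Sigma3
  convert hy using 1
  ext i; simp [cz]

theorem cz_cont : Continuous (fun p : (Fin 3 → ℝ) × (Fin 3 → ℝ) => cz p.1 p.2) := by
  unfold cz; fun_prop

theorem slice_cont {H : (Fin 3 → ℂ) → ℂ} (hH : ContinuousOn H TSigma) {y : Fin 3 → ℝ} (hy : y ∈ Sigma3) :
    Continuous (fun x => H (cz x y)) := by
  rw [← continuousOn_univ]
  exact hH.comp (cz_cont.comp (Continuous.prodMk_left y)).continuousOn (fun x _ => cz_mem hy)

theorem slice_int {H : (Fin 3 → ℂ) → ℂ} (hH : ContinuousOn H TSigma) {y : Fin 3 → ℝ} (hy : y ∈ Sigma3)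
    (h : ∫⁻ x, ‖H (cz x y)‖ₑ ≠ ⊤) : Integrable (fun x => H (cz x y)) :=
  ⟨(slice_cont hH hy).aestronglyMeasurable, lt_top_iff_ne_top.2 h⟩

theorem seg_mem {y y' : Fin 3 → ℝ} (hy : y ∈ Sigma3) (hy' : y' ∈ Sigma3) {t : ℝ} (ht : t ∈ Icc (0:ℝ) 1) :
    y + t • (y' - y) ∈ Sigma3 := by
  rcases eq_or_lt_of_le ht.1 with h | h
  · simpa [← h] using hy
  rcases eq_or_lt_of_le ht.2 with h1 | h1
  · simpa [h1] using hy'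
  have := sig_add (sig_smul hy (sub_pos.2 h1)) (sig_smul hy' h)
  convert this using 1
  rw [smul_sub, sub_smul, one_smul]; abel

theorem shift_eq {H : (Fin 3 → ℂ) → ℂ} (hH : DifferentiableOn ℂ H TSigma) {y y' : Fin 3 → ℝ}
    (hy : y ∈ Sigma3) (hy' : y' ∈ Sigma3) {K : ℝ≥0∞} (hK : K ≠ ⊤)
    (hb : ∀ t ∈ Icc (0:ℝ) 1, ∫⁻ x, ‖H (cz x (y + t • (y' - y)))‖ₑ ≤ K) :
    ∫ x, H (cz x y) = ∫ x, H (cz x y') := by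
  set v := y' - y with hv
  have hc := hH.continuousOn
  have hInt : Integrable (fun p : (Fin 3 → ℝ) × ℝ => H (cz p.1 (y + p.2 • v))) (volume.prod (volume.restrict (Ioc 0 1))) := by
    have hm : AEStronglyMeasurable (fun p : (Fin 3 → ℝ) × ℝ => H (cz p.1 (y + p.2 • v))) (volume.prod (volume.restrict (Ioc 0 1))) := by
      have : (volume : Measure (Fin 3 → ℝ)).prod ((volume : Measure ℝ).restrict (Ioc 0 1)) = (volume.prod volume).restrict (univ ×ˢ Ioc 0 1) := by
        rw [← Measure.prod_restrict, Measure.restrict_univ]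
      rw [this]
      apply ContinuousOn.aestronglyMeasurable _ (MeasurableSet.univ.prod measurableSet_Ioc)
      apply hc.comp
      · apply Continuous.continuousOn
        have := cz_cont
        exact this.comp (by fun_prop : Continuous fun p : (Fin 3 → ℝ) × ℝ => (p.1, y + p.2 • v))
      · rintro ⟨x, t⟩ ⟨_, ht⟩
        exact cz_mem (seg_mem hy hy' ⟨ht.1.le, ht.2⟩)
    refine ⟨hm, ?_⟩
    rw [HasFiniteIntegral, lintegral_prod_symm _ hm.enorm]
    calc _ ≤ ∫⁻ t in Ioc (0:ℝ) 1, K := by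
          apply lintegral_mono_ae
          filter_upwards [ae_restrict_mem measurableSet_Ioc] with t ht
          exact hb t ⟨ht.1.le, ht.2⟩
      _ < ⊤ := by simp [lt_top_iff_ne_top, hK]
  have hint0 : Integrable (fun x => H (cz x y)) := by
    apply slice_int hc hy
    have := hb 0 (by simp)
    simp only [zero_smul, add_zero] at this
    exact ne_top_of_le_ne_top hK this
  have hint1 : Integrable (fun x => H (cz x y')) := by
    apply slice_int hc hy'
    have := hb 1 (by simp)
    simp only [one_smul, hv, add_sub_cancel] at this
    exact ne_top_of_le_ne_top hK this
  let Φ : (Fin 3 → ℝ) → ℂ := fun x => ∫ t in (0:ℝ)..1, H (cz x (y + t • v))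
  have hΦ : Integrable Φ := by
    have := hInt.integral_prod_left
    refine this.congr (ae_of_all _ fun x => ?_)
    simp only [Φ]
    rw [intervalIntegral.integral_of_le zero_le_one]
  have hder : ∀ x, HasLineDerivAt ℝ Φ (-Complex.I * (H (cz x y') - H (cz x y))) x v := by
    intro x
    let k : ℂ → ℂ := fun w => H (cz x y + w • (fun i => (v i : ℂ)))
    have hk : ∀ r t : ℝ, k (r + t * Complex.I) = H (cz (x + r • v) (y + t • v)) := by
      intro r t
      simp only [k]
      congr 1
      ext i
      simp [cz]; ring
    have hkd : DifferentiableOn ℂ k {w | w.im ∈ Icc (0:ℝ) 1} := by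
      apply hH.comp
      · fun_prop
      · intro w hw
        have : w = w.re + w.im * Complex.I := (Complex.re_add_im w).symm
        have h2 : cz x y + w • (fun i => (v i : ℂ)) = cz (x + w.re • v) (y + w.im • v) := by
          ext i
          simp only [cz, Pi.add_apply, Pi.smul_apply, smul_eq_mul]
          conv_lhs => rw [this]
          push_cast; ring
        change cz x y + w • (fun i => (v i : ℂ)) ∈ TSigma
        rw [h2]
        exact cz_mem (seg_mem hy hy' hw)
    have hsl : ∀ t ∈ Icc (0:ℝ) 1, Continuous (fun u : ℝ => k (u + t * Complex.I)) := by
      intro t ht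
      simp_rw [hk]
      exact (slice_cont hc (seg_mem hy hy' ht)).comp (by fun_prop : Continuous fun u : ℝ => x + u • v)
    have hrect : ∀ r : ℝ, Φ (x + r • v) = Φ x + -Complex.I * ((∫ u in (0:ℝ)..r, k (u + (1:ℝ) * Complex.I)) - ∫ u in (0:ℝ)..r, k (u + (0:ℝ) * Complex.I)) := by
      intro r
      have := Complex.integral_boundary_rect_eq_zero_of_differentiableOn k 0 (r + (1:ℝ) * Complex.I) (hkd.mono ?_)
      · simp only [Complex.zero_re, Complex.zero_im, Complex.add_re, Complex.ofReal_re, Complex.mul_re, Complex.I_re, Complex.I_im, Complex.ofReal_im, Complex.add_im, Complex.mul_im, mul_zero, mul_one, zero_mul, sub_zero, add_zero, zero_add, smul_eq_mul] at this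
        have e1 : ∫ t in (0:ℝ)..1, k (r + t * Complex.I) = Φ (x + r • v) := by
          simp_rw [hk]; rfl
        have e2 : ∫ t in (0:ℝ)..1, k ((0:ℝ) + t * Complex.I) = Φ x := by
          simp_rw [hk]; simp [Φ]
        rw [e1, e2] at this
        linear_combination (-Complex.I) * this + (Φ (x + r • v) - Φ x) * Complex.I_mul_I
      · intro w hw
        have := hw.2
        simp at this
        exact this
    have hf : HasDerivAt (fun r : ℝ => Φ x + -Complex.I * ((∫ u in (0:ℝ)..r, k (u + (1:ℝ) * Complex.I)) - ∫ u in (0:ℝ)..r, k (u + (0:ℝ) * Complex.I))) (-Complex.I * (k ((0:ℝ) + (1:ℝ) * Complex.I) - k ((0:ℝ) + (0:ℝ) * Complex.I))) 0 := by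
      apply HasDerivAt.const_add
      apply HasDerivAt.const_mul
      apply HasDerivAt.sub
      · exact ((hsl 1 (by simp)).integral_hasStrictDerivAt 0 0).hasDerivAt
      · exact ((hsl 0 (by simp)).integral_hasStrictDerivAt 0 0).hasDerivAt
    rw [HasLineDerivAt]
    simp_rw [hrect]
    have hA : k ((0:ℝ) + (1:ℝ) * Complex.I) = H (cz x y') := by rw [hk]; simp [hv]
    have hB : k ((0:ℝ) + (0:ℝ) * Complex.I) = H (cz x y) := by rw [hk]; simp
    rw [hA, hB] at hf
    exact hf
  have := integral_bilinear_hasLineDerivAt_right_eq_neg_left_of_integrable (μ := (volume : Measure (Fin 3 → ℝ))) (f := Φ) (f' := fun x => -Complex.I * (H (cz x y') - H (cz x y))) (g := fun _ => (1 : ℂ)) (g' := fun _ => 0) (v := v) (B := ContinuousLinearMap.mul ℝ ℂ)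
    (by simpa using ((hint1.sub hint0).const_mul (-Complex.I))) (by simp) (by simpa using hΦ) (fun x _ => hder x)
    (fun x _ => by rw [HasLineDerivAt]; exact hasDerivAt_const _ _)
  simp only [ContinuousLinearMap.mul_apply', mul_zero, integral_zero, mul_one] at this
  rw [integral_const_mul, integral_sub hint1 hint0] at this
  have h3 : Complex.I * ((∫ x, H (cz x y')) - ∫ x, H (cz x y)) = 0 := by
    linear_combination -this
  have h4 := (mul_eq_zero.1 h3).resolve_left Complex.I_ne_zero
  exact (sub_eq_zero.1 h4).symm

def ft (G : (Fin 3 → ℂ) → ℂ) (y ξ : Fin 3 → ℝ) : ℂ :=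
  ∫ x : Fin 3 → ℝ, Complex.exp (-2 * Real.pi * Complex.I * (∑ i, (x i : ℂ) * ξ i)) * G (cz x y)

theorem exp_norm_one (x ξ : Fin 3 → ℝ) :
    ‖Complex.exp (-2 * Real.pi * Complex.I * (∑ i, (x i : ℂ) * ξ i))‖ = 1 := by
  rw [Complex.norm_exp]
  simp [Fin.sum_univ_three]

theorem exp_enorm_one (x ξ : Fin 3 → ℝ) :
    ‖Complex.exp (-2 * Real.pi * Complex.I * (∑ i, (x i : ℂ) * ξ i))‖ₑ = 1 := by
  rw [← ofReal_norm, exp_norm_one]; simp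

theorem ker_neg_cz (x y ξ : Fin 3 → ℝ) :
    ker (-(cz x y)) ξ = (Real.exp (2 * Real.pi * ∑ i, y i * ξ i) : ℂ) * Complex.exp (-2 * Real.pi * Complex.I * (∑ i, (x i : ℂ) * ξ i)) := by
  rw [ker, Complex.ofReal_exp, ← Complex.exp_add]
  congr 1
  simp [Fin.sum_univ_three, cz]
  ring_nf
  simp

theorem ker_cz (x y ξ : Fin 3 → ℝ) :
    ker (cz x y) ξ = Complex.exp (2 * Real.pi * Complex.I * (∑ i, (x i : ℂ) * ξ i)) * (Real.exp (-(2 * Real.pi * ∑ i, y i * ξ i)) : ℂ)  := by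
  rw [ker, Complex.ofReal_exp, ← Complex.exp_add]
  congr 1
  simp [Fin.sum_univ_three, cz]
  ring_nf
  simp
  ring

theorem ft_shift {G : (Fin 3 → ℂ) → ℂ} (hG : DifferentiableOn ℂ G TSigma) {M : ℝ≥0∞} (hM : M ≠ ⊤)
    (hb : ∀ y ∈ Sigma3, ∫⁻ x, ‖G (cz x y)‖ₑ ≤ M) {y y' : Fin 3 → ℝ} (hy : y ∈ Sigma3) (hy' : y' ∈ Sigma3) (ξ : Fin 3 → ℝ) :
    (Real.exp (2 * Real.pi * ∑ i, y i * ξ i) : ℂ) * ft G y ξ = (Real.exp (2 * Real.pi * ∑ i, y' i * ξ i) : ℂ) * ft G y' ξ := by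
  have key : ∀ y : Fin 3 → ℝ, (Real.exp (2 * Real.pi * ∑ i, y i * ξ i) : ℂ) * ft G y ξ = ∫ x, (fun z => ker (-z) ξ * G z) (cz x y) := by
    intro y
    rw [ft, ← integral_const_mul]
    congr 1; ext x
    simp only [ker_neg_cz, mul_assoc]
  rw [key, key]
  set D := |∑ i, y i * ξ i| + |∑ i, y' i * ξ i| with hD
  refine shift_eq (H := fun z => ker (-z) ξ * G z) (K := ENNReal.ofReal (Real.exp (2 * Real.pi * D)) * M) ?_ hy hy' (ENNReal.mul_ne_top (by simp) hM) ?_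
  · refine DifferentiableOn.mul ?_ hG
    apply Differentiable.differentiableOn
    unfold ker
    fun_prop
  · intro t ht
    have h1 : ∀ x, ‖ker (-(cz x (y + t • (y' - y)))) ξ * G (cz x (y + t • (y' - y)))‖ₑ ≤ ENNReal.ofReal (Real.exp (2 * Real.pi * D)) * ‖G (cz x (y + t • (y' - y)))‖ₑ := by
      intro x
      rw [enorm_mul]
      gcongr
      rw [ker_neg_cz, enorm_mul, exp_enorm_one, mul_one, ← ofReal_norm]
      apply ENNReal.ofReal_le_ofReal
      rw [Complex.norm_real, Real.norm_of_nonneg (Real.exp_pos _).le]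
      gcongr
      have : ∑ i, (y + t • (y' - y)) i * ξ i = (1 - t) * ∑ i, y i * ξ i + t * ∑ i, y' i * ξ i := by
        simp [Fin.sum_univ_three]; ring
      rw [this]
      have a1 : (1 - t) * ∑ i, y i * ξ i ≤ |∑ i, y i * ξ i| := by
        nlinarith [le_abs_self (∑ i, y i * ξ i), abs_nonneg (∑ i, y i * ξ i), ht.1, ht.2]
      have a2 : t * ∑ i, y' i * ξ i ≤ |∑ i, y' i * ξ i| := by
        nlinarith [le_abs_self (∑ i, y' i * ξ i), abs_nonneg (∑ i, y' i * ξ i), ht.1, ht.2]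
      linarith
    refine (lintegral_mono h1).trans ?_
    rw [lintegral_const_mul' _ _ (by simp)]
    gcongr
    exact hb _ (seg_mem hy hy' ht)

theorem ft_bound {G : (Fin 3 → ℂ) → ℂ} {M : ℝ≥0∞} 
    (hb : ∀ y ∈ Sigma3, ∫⁻ x, ‖G (cz x y)‖ₑ ≤ M) {y : Fin 3 → ℝ} (hy : y ∈ Sigma3) (ξ : Fin 3 → ℝ) : ‖ft G y ξ‖ₑ ≤ M := by
  rw [ft]
  refine (enorm_integral_le_lintegral_enorm _).trans ?_
  simp only [enorm_mul, exp_enorm_one, one_mul]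
  exact hb y hy

theorem ft_cont {G : (Fin 3 → ℂ) → ℂ} (hG : ContinuousOn G TSigma) {y : Fin 3 → ℝ} (hy : y ∈ Sigma3) 
    (h : ∫⁻ x, ‖G (cz x y)‖ₑ ≠ ⊤) : Continuous (ft G y) := by
  unfold ft
  have hs := slice_cont hG hy
  apply continuous_of_dominated (bound := fun x => ‖G (cz x y)‖)
  · intro ξ
    apply Continuous.aestronglyMeasurable
    exact Continuous.mul (by fun_prop) hs
  · intro ξ
    filter_upwards with x
    rw [norm_mul, exp_norm_one, one_mul]
  · exact (slice_int hG hy h).norm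
  · filter_upwards with x
    fun_prop

theorem int_expabs {c : ℝ} (hc : 0 < c) : Integrable (fun ξ : Fin 3 → ℝ => Real.exp (-(c * ∑ i, |ξ i|))) := by
  have h1 : Integrable (fun t : ℝ => Real.exp (-(c * |t|))) := by
    rw [← integrableOn_univ, ← Iic_union_Ioi (a := (0:ℝ))]
    apply IntegrableOn.union
    · refine (integrableOn_exp_mul_Iic hc 0).congr_fun (fun t ht => ?_) measurableSet_Iic
      simp only [abs_of_nonpos (show t ≤ 0 from ht)]
      congr 1; ring
    · refine (integrableOn_exp_mul_Ioi (neg_lt_zero.2 hc) 0).congr_fun (fun t ht => ?_) measurableSet_Ioi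
      simp only [abs_of_pos (show 0 < t from ht)]
      congr 1; ring
  have := Integrable.fintype_prod (f := fun (_ : Fin 3) (t : ℝ) => Real.exp (-(c * |t|))) (fun _ => h1)
  refine this.congr ?_
  filter_upwards with ξ
  rw [← Real.exp_sum, Finset.sum_neg_distrib, Finset.mul_sum]

theorem repr_thm {G : (Fin 3 → ℂ) → ℂ} (hG : DifferentiableOn ℂ G TSigma) {M : ℝ≥0∞} (hM : M ≠ ⊤)
    (hb : ∀ y ∈ Sigma3, ∫⁻ x, ‖G (cz x y)‖ₑ ≤ M) :
    ∃ f, Adm f ∧ EqOn G (Lap f) TSigma ∧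
      ∀ y ∈ Sigma3, ∫⁻ ξ, ‖ker (cz 0 y) ξ * f ξ‖ₑ ^ 2 ≤ ∫⁻ x, ‖G (cz x y)‖ₑ ^ 2 := by
  set f : (Fin 3 → ℝ) → ℂ := fun ξ => (Real.exp (2 * Real.pi * ∑ i, e00 i * ξ i) : ℂ) * ft G e00 ξ with hf
  have hft : ∀ y ∈ Sigma3, ∀ ξ, ft G y ξ = (Real.exp (-(2 * Real.pi * ∑ i, y i * ξ i)) : ℂ) * f ξ := by
    intro y hy ξ
    rw [hf]
    simp only
    rw [ft_shift hG hM hb e00_mem hy, ← mul_assoc, ← Complex.ofReal_mul, ← Real.exp_add]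
    simp
  have hb1 : ∀ y ∈ Sigma3, ∀ ξ, ‖ft G y ξ‖ ≤ M.toReal := by
    intro y hy ξ
    have := ENNReal.toReal_mono hM (ft_bound hb hy ξ)
    simpa using this
  have hfb : ∀ y ∈ Sigma3, ∀ ξ, ‖f ξ‖ ≤ M.toReal * Real.exp (2 * Real.pi * ∑ i, y i * ξ i) := by
    intro y hy ξ
    have h1 := hb1 y hy ξ
    rw [hft y hy, norm_mul, Complex.norm_real, Real.norm_of_nonneg (Real.exp_pos _).le, Real.exp_neg] at h1
    have hp := Real.exp_pos (2 * Real.pi * ∑ i, y i * ξ i)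
    rwa [inv_mul_le_iff₀ hp, mul_comm] at h1
  have hfin : ∀ y ∈ Sigma3, ∫⁻ x, ‖G (cz x y)‖ₑ ≠ ⊤ := fun y hy => ne_top_of_le_ne_top hM (hb y hy)
  have hcont : Continuous f := by
    rw [hf]
    have := ft_cont hG.continuousOn e00_mem (hfin _ e00_mem)
    fun_prop
  have hsupp : ∀ ξ, ξ ∉ dualC → f ξ = 0 := by
    intro ξ hξ
    simp only [dualC, mem_ofPred_eq, not_forall, not_le] at hξ
    obtain ⟨y, hy, hlt⟩ := hξ
    have h1 : ∀ n : ℕ, ‖f ξ‖ ≤ M.toReal * Real.exp (2 * Real.pi * ((n + 1 : ℝ) * ∑ i, y i * ξ i)) := by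
      intro n
      have := hfb _ (sig_smul hy (t := n + 1) (by positivity)) ξ
      simpa [Finset.mul_sum, mul_assoc] using this
    have h2 : Filter.Tendsto (fun n : ℕ => M.toReal * Real.exp (2 * Real.pi * ((n + 1 : ℝ) * ∑ i, y i * ξ i))) Filter.atTop (nhds (M.toReal * 0)) := by
      apply Filter.Tendsto.const_mul
      apply Real.tendsto_exp_atBot.comp
      apply Filter.Tendsto.const_mul_atBot (by positivity)
      apply Filter.Tendsto.atTop_mul_const_of_neg hlt
      exact Filter.tendsto_atTop_add_const_right _ _ tendsto_natCast_atTop_atTop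
    have h3 := ge_of_tendsto' h2 h1
    rw [mul_zero] at h3
    exact norm_le_zero_iff.1 h3
  have hInt : ∀ z ∈ TSigma, Integrable (fun ξ => ker z ξ * f ξ) := by
    intro z hz
    obtain ⟨s, hs, hys⟩ := sig_shrink (y := fun i => (z i).im) hz
    have hI := (int_expabs (c := 2 * Real.pi * s / 4) (by positivity)).const_mul M.toReal
    refine hI.mono' ?_ ?_
    · apply Continuous.aestronglyMeasurable
      exact (ker_cont.comp (Continuous.prodMk_right z)).mul hcont
    · filter_upwards with ξ
      by_cases hξ : ξ ∈ dualC
      swap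
      · rw [hsupp ξ hξ]; simp; positivity
      rw [norm_mul, norm_ker]
      have h1 := hfb _ hys ξ
      refine (mul_le_mul_of_nonneg_left h1 (Real.exp_pos _).le).trans ?_
      rw [mul_left_comm, ← Real.exp_add]
      gcongr
      have h2 := dual_abs hξ
      have h3 : ∑ i, ((fun i => (z i).im) - s • e00) i * ξ i = ∑ i, (z i).im * ξ i - s * (ξ 0 + ξ 1) := by
        simp [Fin.sum_univ_three, e00]; ring
      rw [h3]
      have : 2 * Real.pi * s / 4 * ∑ i, |ξ i| ≤ 2 * Real.pi * s / 4 * (4 * (ξ 0 + ξ 1)) := by gcongr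
      linarith
  have hadm : Adm f := ⟨hcont.measurable, hsupp, hInt⟩
  refine ⟨f, hadm, ?_, ?_⟩
  · intro z hz
    set y : Fin 3 → ℝ := fun i => (z i).im with hy
    have hyS : y ∈ Sigma3 := hz
    have hzc : z = cz (fun i => (z i).re) y := by
      ext i; simp [cz, hy]
    have hc := slice_cont hG.continuousOn hyS
    have := finv (fun x => G (cz x y)) (slice_int hG.continuousOn hyS (hfin y hyS)) hc ?_ (fun i => (z i).re)
    · rw [hzc]
      refine this.trans ?_
      rw [Lap]
      congr 1; ext ξ
      have e := hft y hyS ξ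
      rw [ft] at e
      rw [ker_cz, e]; ring
    · have h0 := hInt (cz 0 y) (cz_mem hyS)
      refine h0.congr ?_
      filter_upwards with ξ
      rw [ker_cz]
      simp only [Pi.zero_apply, Complex.ofReal_zero, zero_mul, Finset.sum_const_zero, mul_zero, Complex.exp_zero, one_mul]
      exact (hft y hyS ξ).symm
  · intro y hyS
    have := planch_le (fun x => G (cz x y)) (slice_int hG.continuousOn hyS (hfin y hyS))
    refine le_trans (le_of_eq ?_) this
    congr 1; ext ξ
    rw [ker_cz]
    simp only [Pi.zero_apply, Complex.ofReal_zero, zero_mul, Finset.sum_const_zero, mul_zero, Complex.exp_zero, one_mul]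
    congr 2
    exact (hft y hyS ξ).symm

theorem repr_L2 {f : (Fin 3 → ℝ) → ℂ} (hf : Adm f) {N : ℝ≥0∞}
    (h : ∀ y ∈ Sigma3, ∫⁻ ξ, ‖ker (cz 0 y) ξ * f ξ‖ₑ ^ 2 ≤ N) : ∫⁻ ξ, ‖f ξ‖ₑ ^ 2 ≤ N := by
  have hlim : ∀ ξ, Filter.Tendsto (fun n : ℕ => ‖ker (cz 0 ((1 / ((n:ℝ) + 1)) • e00)) ξ * f ξ‖ₑ ^ 2) Filter.atTop (nhds (‖f ξ‖ₑ ^ 2)) := by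
    intro ξ
    have h1 : Continuous (fun t : ℝ => ‖ker (cz 0 (t • e00)) ξ * f ξ‖ₑ ^ 2) := by
      have : Continuous (fun t : ℝ => ker (cz 0 (t • e00)) ξ) := by
        unfold ker cz; fun_prop
      fun_prop
    have h2 := (h1.tendsto 0).comp tendsto_one_div_add_atTop_nhds_zero_nat
    have h3 : ker (cz 0 ((0:ℝ) • e00)) ξ = 1 := by simp [ker, cz]
    simp only [h3, one_mul] at h2
    exact h2
  have hm : ∀ n : ℕ, Measurable (fun ξ => ‖ker (cz 0 ((1 / ((n:ℝ) + 1)) • e00)) ξ * f ξ‖ₑ ^ 2) := by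
    intro n
    have := hf.meas
    have h2 : Measurable (ker (cz 0 ((1 / ((n:ℝ) + 1)) • e00))) := (ker_cont.comp (Continuous.prodMk_right _)).measurable
    fun_prop
  calc ∫⁻ ξ, ‖f ξ‖ₑ ^ 2 = ∫⁻ ξ, Filter.liminf (fun n : ℕ => ‖ker (cz 0 ((1 / ((n:ℝ) + 1)) • e00)) ξ * f ξ‖ₑ ^ 2) Filter.atTop := by
        congr 1; ext ξ; exact (hlim ξ).liminf_eq.symm
    _ ≤ Filter.liminf (fun n : ℕ => ∫⁻ ξ, ‖ker (cz 0 ((1 / ((n:ℝ) + 1)) • e00)) ξ * f ξ‖ₑ ^ 2) Filter.atTop := lintegral_liminf_le hm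
    _ ≤ N := by
        refine Filter.liminf_le_of_le (by isBoundedDefault) ?_
        intro b hb
        obtain ⟨n, hn⟩ := hb.exists
        exact hn.trans (h _ (sig_smul e00_mem (by positivity)))

theorem ofReal_gamma {a r : ℝ} (ha : 0 < a) (hr : 0 < r) :
    ∫⁻ y in Ioi (0:ℝ), ENNReal.ofReal (y ^ (a - 1)) * ENNReal.ofReal (Real.exp (-(r * y))) = ENNReal.ofReal ((1 / r) ^ a * Real.Gamma a) := by
  have h := Real.integral_rpow_mul_exp_neg_mul_Ioi ha hr
  have hpos : 0 < (1 / r) ^ a * Real.Gamma a := mul_pos (by positivity) (Real.Gamma_pos_of_pos ha)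
  have hi : Integrable (fun t : ℝ => t ^ (a - 1) * Real.exp (-(r * t))) (volume.restrict (Ioi 0)) :=
    Integrable.of_integral_ne_zero (by rw [h]; exact hpos.ne')
  rw [← h, ofReal_integral_eq_lintegral_ofReal hi]
  · refine setLIntegral_congr_fun measurableSet_Ioi (fun y hy => ?_)
    rw [ENNReal.ofReal_mul (Real.rpow_nonneg (le_of_lt hy) _)]
  · refine (ae_restrict_iff' measurableSet_Ioi).2 (ae_of_all _ fun y hy => ?_)
    exact mul_nonneg (Real.rpow_nonneg (le_of_lt hy) _) (Real.exp_pos _).le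

theorem UHP_meas : MeasurableSet UHP := measurableSet_lt measurable_const Complex.measurable_im

theorem lint_Vm (α : ℝ) {φ : ℂ → ℝ≥0∞} (hφ : Measurable φ) :
    ∫⁻ z, φ z ∂(Vm α) = ∫⁻ y in Ioi (0:ℝ), ENNReal.ofReal (y ^ α) * ∫⁻ x : ℝ, φ (x + y * Complex.I) := by
  have hw : Measurable (fun z : ℂ => ENNReal.ofReal (z.im ^ α)) :=
    (Complex.measurable_im.pow_const α).ennreal_ofReal
  rw [Vm, lintegral_withDensity_eq_lintegral_mul _ hw hφ, ← lintegral_indicator UHP_meas,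
    ← (Complex.volume_preserving_equiv_real_prod.symm _).lintegral_comp ((hw.mul hφ).indicator UHP_meas),
    Measure.volume_eq_prod, lintegral_prod_symm' (fun a => UHP.indicator ((fun z : ℂ => ENNReal.ofReal (z.im ^ α)) * φ) (Complex.measurableEquivRealProd.symm a)) (((hw.mul hφ).indicator UHP_meas).comp Complex.measurableEquivRealProd.symm.measurable),
    ← lintegral_indicator measurableSet_Ioi]
  congr 1; ext y
  have hz : ∀ x : ℝ, Complex.measurableEquivRealProd.symm (x, y) = x + y * Complex.I := by
    intro x
    apply Complex.ext <;> simp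
  simp only [hz]
  by_cases hy : 0 < y
  · rw [indicator_of_mem (show y ∈ Ioi 0 from hy), ← lintegral_const_mul']
    · congr 1; ext x
      rw [indicator_of_mem]
      · simp
      · simp [UHP, hy]
    · simp
  · rw [indicator_of_notMem (show y ∉ Ioi 0 from hy)]
    rw [← lintegral_zero (μ := (volume : Measure ℝ))]
    congr 1; ext x
    rw [indicator_of_notMem]
    simpa [UHP] using hy

theorem cs_ball {u : ℝ → ℝ≥0∞} (hu : Measurable u) (S : Set ℝ) :
    (∫⁻ t in S, u t) ^ 2 ≤ volume S * ∫⁻ t, u t ^ 2 := by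
  have h := ENNReal.lintegral_mul_le_Lp_mul_Lq (volume.restrict S) (p := 2) (q := 2) (by constructor <;> norm_num) (f := fun _ => 1) (g := u) aemeasurable_const hu.aemeasurable
  simp only [Pi.mul_apply, one_mul, ENNReal.one_rpow, lintegral_const, Measure.restrict_apply MeasurableSet.univ, univ_inter] at h
  refine (pow_le_pow_left' h 2).trans ?_
  rw [mul_pow, ← ENNReal.rpow_natCast, ← ENNReal.rpow_mul, ← ENNReal.rpow_natCast, ← ENNReal.rpow_mul]
  norm_num
  gcongr
  exact Measure.restrict_le_self

def v3 (ξ : Fin 2 → ℝ) (t : ℝ) : Fin 3 → ℝ := ![ξ 0, ξ 1, t]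

def e3 : (Fin 2 → ℝ) × ℝ ≃ᵐ (Fin 3 → ℝ) :=
  MeasurableEquiv.prodComm.trans (MeasurableEquiv.piFinSuccAbove (fun _ : Fin 3 => ℝ) (Fin.last 2)).symm

theorem e3_apply (p : (Fin 2 → ℝ) × ℝ) : e3 p = v3 p.1 p.2 := by
  ext i
  fin_cases i <;> rfl

theorem e3_mp : MeasurePreserving e3 (volume.prod volume) volume := by
  have h1 : MeasurePreserving (MeasurableEquiv.piFinSuccAbove (fun _ : Fin 3 => ℝ) (Fin.last 2)).symm (volume.prod volume) volume :=
    (volume_preserving_piFinSuccAbove (fun _ : Fin 3 => ℝ) (Fin.last 2)).symm _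
  exact h1.comp (Measure.measurePreserving_swap)

theorem v3_meas : Measurable (fun p : (Fin 2 → ℝ) × ℝ => v3 p.1 p.2) := by
  have := e3.measurable
  simpa only [funext e3_apply] using this

def hh (g : (Fin 3 → ℝ) → ℂ) (ξ : Fin 2 → ℝ) : ℂ := ∫ t, g (v3 ξ t)

theorem hh_meas {g : (Fin 3 → ℝ) → ℂ} (hg : Measurable g) : Measurable (hh g) := by
  have h1 : StronglyMeasurable (fun p : (Fin 2 → ℝ) × ℝ => g (v3 p.1 p.2)) := (hg.comp v3_meas).stronglyMeasurable
  exact (StronglyMeasurable.integral_prod_right (f := fun (ξ : Fin 2 → ℝ) t => g (v3 ξ t)) h1).measurable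

theorem Lap_meas {g : (Fin 3 → ℝ) → ℂ} (hg : Measurable g) : Measurable (Lap g) := by
  have h1 : StronglyMeasurable (fun p : (Fin 3 → ℂ) × (Fin 3 → ℝ) => ker p.1 p.2 * g p.2) :=
    (ker_cont.measurable.mul (hg.comp measurable_snd)).stronglyMeasurable
  exact (StronglyMeasurable.integral_prod_right (f := fun (z : Fin 3 → ℂ) ξ => ker z ξ * g ξ) h1).measurable

theorem pair_mem {z1 z2 : ℂ} (h1 : 0 < z1.im) (h2 : 0 < z2.im) : ![z1, z2, 0] ∈ TSigma := by
  change (fun i => ((![z1, z2, 0] : Fin 3 → ℂ) i).im) ∈ Sigma3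
  constructor
  · simp; positivity
  · simpa using h1

theorem ker_v3 (x : Fin 2 → ℝ) (y1 y2 : ℝ) (ξ : Fin 2 → ℝ) (t : ℝ) :
    ker ![x 0 + y1 * Complex.I, x 1 + y2 * Complex.I, 0] (v3 ξ t) =
      Complex.exp (-2 * Real.pi * Complex.I * (∑ i, (ξ i : ℂ) * ((-x) i : ℝ))) * (Real.exp (-(2 * Real.pi * ξ 0 * y1)) * Real.exp (-(2 * Real.pi * ξ 1 * y2)) : ℝ) := by
  rw [ker, ← Real.exp_add, Complex.ofReal_exp, ← Complex.exp_add]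
  congr 1
  simp [Fin.sum_univ_three, v3]
  ring_nf
  simp
  ring

theorem slice_bound {g : (Fin 3 → ℝ) → ℂ} (hg : Adm g) {y1 y2 : ℝ} (h1 : 0 < y1) (h2 : 0 < y2) :
    ∫⁻ x1 : ℝ, ∫⁻ x2 : ℝ, ‖Lap g ![x1 + y1 * Complex.I, x2 + y2 * Complex.I, 0]‖ₑ ^ 2 ≤
      ∫⁻ ξ : Fin 2 → ℝ, ENNReal.ofReal (Real.exp (-(4 * Real.pi * ξ 0 * y1))) * ENNReal.ofReal (Real.exp (-(4 * Real.pi * ξ 1 * y2))) * ‖hh g ξ‖ₑ ^ 2 := by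
  set k : (Fin 2 → ℝ) → ℂ := fun ξ => (Real.exp (-(2 * Real.pi * ξ 0 * y1)) * Real.exp (-(2 * Real.pi * ξ 1 * y2)) : ℝ) * hh g ξ with hk
  have hT : ∀ x : Fin 2 → ℝ, (![x 0 + y1 * Complex.I, x 1 + y2 * Complex.I, 0] : Fin 3 → ℂ) ∈ TSigma := fun x =>
    pair_mem (by simpa using h1) (by simpa using h2)
  have hI : ∀ x : Fin 2 → ℝ, Integrable (fun p : (Fin 2 → ℝ) × ℝ => ker ![x 0 + y1 * Complex.I, x 1 + y2 * Complex.I, 0] (v3 p.1 p.2) * g (v3 p.1 p.2)) (volume.prod volume) := by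
    intro x
    have := e3_mp.integrable_comp_of_integrable (hg.int _ (hT x))
    simpa only [Function.comp_def, e3_apply] using this
  have hin : ∀ (x : Fin 2 → ℝ) ξ, ∫ t, ker ![x 0 + y1 * Complex.I, x 1 + y2 * Complex.I, 0] (v3 ξ t) * g (v3 ξ t) = Complex.exp (-2 * Real.pi * Complex.I * (∑ i, (ξ i : ℂ) * ((-x) i : ℝ))) * k ξ := by
    intro x ξ
    simp only [ker_v3]
    rw [integral_const_mul, mul_assoc]; rfl
  have hL : ∀ x : Fin 2 → ℝ, Lap g ![x 0 + y1 * Complex.I, x 1 + y2 * Complex.I, 0] = ∫ ξ : Fin 2 → ℝ, Complex.exp (-2 * Real.pi * Complex.I * (∑ i, (ξ i : ℂ) * ((-x) i : ℝ))) * k ξ := by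
    intro x
    rw [Lap, ← e3_mp.integral_comp e3.measurableEmbedding]
    simp only [e3_apply]
    rw [integral_prod _ (hI x)]
    simp only [hin]
  have hki : Integrable k := by
    have := (hI 0).integral_prod_left
    simp only [hin] at this
    simpa using this
  have hmL : Measurable (fun x : ℝ × ℝ => ‖Lap g ![x.1 + y1 * Complex.I, x.2 + y2 * Complex.I, 0]‖ₑ ^ 2) := by
    have : Measurable (fun x : ℝ × ℝ => (![x.1 + y1 * Complex.I, x.2 + y2 * Complex.I, 0] : Fin 3 → ℂ)) := by
      rw [measurable_pi_iff]
      intro i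
      fin_cases i <;> simp <;> fun_prop
    exact ((Lap_meas hg.meas).comp this).enorm.pow_const 2
  have hP := planch_le k hki
  calc _ = ∫⁻ x : ℝ × ℝ, ‖Lap g ![x.1 + y1 * Complex.I, x.2 + y2 * Complex.I, 0]‖ₑ ^ 2 := by
        rw [Measure.volume_eq_prod, lintegral_prod _ hmL.aemeasurable]
    _ = ∫⁻ x : Fin 2 → ℝ, ‖Lap g ![x 0 + y1 * Complex.I, x 1 + y2 * Complex.I, 0]‖ₑ ^ 2 := by
        rw [← (volume_preserving_finTwoArrow ℝ).lintegral_comp hmL]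
        rfl
    _ = ∫⁻ x : Fin 2 → ℝ, ‖∫ ξ : Fin 2 → ℝ, Complex.exp (-2 * Real.pi * Complex.I * (∑ i, (ξ i : ℂ) * ((-x) i : ℝ))) * k ξ‖ₑ ^ 2 := by
        simp only [hL]
    _ = ∫⁻ x : Fin 2 → ℝ, ‖∫ ξ : Fin 2 → ℝ, Complex.exp (-2 * Real.pi * Complex.I * (∑ i, (ξ i : ℂ) * (x i : ℝ))) * k ξ‖ₑ ^ 2 := 
        lintegral_neg_eq_self (fun x : Fin 2 → ℝ => ‖∫ ξ : Fin 2 → ℝ, Complex.exp (-2 * Real.pi * Complex.I * (∑ i, (ξ i : ℂ) * (x i : ℝ))) * k ξ‖ₑ ^ 2)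
    _ ≤ ∫⁻ ξ, ‖k ξ‖ₑ ^ 2 := hP
    _ = _ := by
        congr 1; ext ξ
        rw [hk]
        simp only
        rw [enorm_mul, mul_pow]
        congr 1
        rw [← ofReal_norm, Complex.norm_real, Real.norm_of_nonneg (by positivity), ← ENNReal.ofReal_pow (by positivity), ← ENNReal.ofReal_mul (by positivity), mul_pow, ← Real.exp_nat_mul, ← Real.exp_nat_mul]
        congr 3 <;> push_cast <;> ring_nf

theorem f_v3_supp {f : (Fin 3 → ℝ) → ℂ} (hf : Adm f) {ξ : Fin 2 → ℝ} {t : ℝ} (h : f (v3 ξ t) ≠ 0) :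
    0 ≤ ξ 0 ∧ 0 ≤ ξ 1 ∧ t ^ 2 ≤ 4 * ξ 0 * ξ 1 := by
  have hm : v3 ξ t ∈ dualC := by
    by_contra hc; exact h (hf.supp _ hc)
  have a := dual0 hm
  have b := dual1 hm
  have c := dual2 hm
  simp [v3] at a b c
  exact ⟨a, b, c⟩

theorem hh_zero {f : (Fin 3 → ℝ) → ℂ} (hf : Adm f) (m : ℕ) {ξ : Fin 2 → ℝ} (h : ξ 0 ≤ 0 ∨ ξ 1 ≤ 0) :
    hh (fun ξ => (qf ξ : ℂ) ^ m * f ξ) ξ = 0 := by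
  rw [hh]
  apply integral_eq_zero_of_ae
  have : ∀ᵐ t : ℝ, t ≠ 0 := by simp [ae_iff]
  filter_upwards [this] with t ht
  have : f (v3 ξ t) = 0 := by
    by_contra hc
    obtain ⟨a, b, c⟩ := f_v3_supp hf hc
    have h2 : 0 < t ^ 2 := by positivity
    rcases h with h | h
    · have : ξ 0 = 0 := le_antisymm h a
      rw [this] at c; simp at c; exact ht c
    · have : ξ 1 = 0 := le_antisymm h b
      rw [this] at c; simp at c; exact ht c
  simp [this]

theorem hh_bound {f : (Fin 3 → ℝ) → ℂ} (hf : Adm f) (m : ℕ) {ξ : Fin 2 → ℝ} (h0 : 0 < ξ 0) (h1 : 0 < ξ 1) :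
    ‖hh (fun ξ => (qf ξ : ℂ) ^ m * f ξ) ξ‖ₑ ^ 2 ≤
      ENNReal.ofReal ((16 * Real.pi ^ 2 * (ξ 0 * ξ 1)) ^ (2 * m) * (4 * Real.sqrt (ξ 0 * ξ 1))) * ∫⁻ t, ‖f (v3 ξ t)‖ₑ ^ 2 := by
  set Q := 16 * Real.pi ^ 2 * (ξ 0 * ξ 1) with hQ
  set r := 2 * Real.sqrt (ξ 0 * ξ 1) with hr
  have hQ0 : 0 ≤ Q := by positivity
  have hfm : Measurable (fun t => ‖f (v3 ξ t)‖ₑ) := (hf.meas.comp (v3_meas.comp (measurable_prodMk_left (x := ξ)))).enorm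
  have hb : ∀ t, ‖(qf (v3 ξ t) : ℂ) ^ m * f (v3 ξ t)‖ₑ ≤ (Icc (-r) r).indicator (fun t => ENNReal.ofReal (Q ^ m) * ‖f (v3 ξ t)‖ₑ) t := by
    intro t
    by_cases hc : f (v3 ξ t) = 0
    · simp [hc]
    obtain ⟨a, b, c⟩ := f_v3_supp hf hc
    have hsq : r ^ 2 = 4 * ξ 0 * ξ 1 := by
      rw [hr, mul_pow, Real.sq_sqrt (by positivity)]; ring
    have ht : t ∈ Icc (-r) r := abs_le.1 (abs_le_of_sq_le_sq (by rw [hsq]; exact c) (by positivity))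
    rw [indicator_of_mem ht, enorm_mul]
    gcongr
    have hq0 : 0 ≤ qf (v3 ξ t) := by
      simp only [qf, v3]; simp
      apply mul_nonneg (by positivity); linarith
    have hqQ : qf (v3 ξ t) ≤ Q := by
      simp only [qf, v3, hQ]; simp
      nlinarith [sq_nonneg t, mul_nonneg (sq_nonneg Real.pi) (sq_nonneg t)]
    rw [← ofReal_norm, norm_pow, Complex.norm_real, Real.norm_of_nonneg hq0]
    exact ENNReal.ofReal_le_ofReal (pow_le_pow_left₀ hq0 hqQ m)
  have h2 : ‖hh (fun ξ => (qf ξ : ℂ) ^ m * f ξ) ξ‖ₑ ≤ ENNReal.ofReal (Q ^ m) * ∫⁻ t in Icc (-r) r, ‖f (v3 ξ t)‖ₑ := by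
    rw [hh]
    refine (enorm_integral_le_lintegral_enorm _).trans ((lintegral_mono hb).trans ?_)
    rw [lintegral_indicator measurableSet_Icc, lintegral_const_mul' _ _ (by simp)]
  refine (pow_le_pow_left' h2 2).trans ?_
  rw [mul_pow, ← ENNReal.ofReal_pow (by positivity), ENNReal.ofReal_mul (by positivity), mul_assoc, ← pow_mul, mul_comm m 2]
  gcongr
  refine (cs_ball hfm _).trans (le_of_eq ?_)
  rw [Real.volume_Icc]
  congr 2
  rw [hr]; ring

def Cm (m : ℕ) : ℝ := Real.Gamma (2 * m + 1 / 2) ^ 2 / Real.pi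

theorem Cm_pos (m : ℕ) : 0 < Cm m := by
  have : 0 < Real.Gamma (2 * m + 1 / 2) := Real.Gamma_pos_of_pos (by positivity)
  unfold Cm; positivity

theorem const_calc (m : ℕ) {p q : ℝ} (hp : 0 < p) (hq : 0 < q) :
    ((1 / (4 * Real.pi * p)) ^ (2 * m + 1 / 2 : ℝ) * Real.Gamma (2 * m + 1 / 2)) * ((1 / (4 * Real.pi * q)) ^ (2 * m + 1 / 2 : ℝ) * Real.Gamma (2 * m + 1 / 2)) *
      ((16 * Real.pi ^ 2 * (p * q)) ^ (2 * m) * (4 * Real.sqrt (p * q))) = Cm m := by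
  have hpi := Real.pi_pos
  set X := 16 * Real.pi ^ 2 * (p * q) with hX
  have hX0 : 0 < X := by positivity
  have h1 : (1 / (4 * Real.pi * p)) ^ (2 * m + 1 / 2 : ℝ) * (1 / (4 * Real.pi * q)) ^ (2 * m + 1 / 2 : ℝ) = (X ^ (2 * m) * Real.sqrt X)⁻¹ := by
    rw [← Real.mul_rpow (by positivity) (by positivity)]
    have : 1 / (4 * Real.pi * p) * (1 / (4 * Real.pi * q)) = X⁻¹ := by rw [hX]; field_simp; ring
    rw [this, Real.inv_rpow hX0.le, Real.rpow_add hX0, Real.sqrt_eq_rpow]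
    congr 2
    exact_mod_cast Real.rpow_natCast X (2 * m)
  have h2 : Real.sqrt X = 4 * Real.pi * Real.sqrt (p * q) := by
    rw [hX, Real.sqrt_mul (by positivity)]
    congr 1
    rw [show 16 * Real.pi ^ 2 = (4 * Real.pi) ^ 2 by ring]
    exact Real.sqrt_sq (by positivity)
  calc _ = ((1 / (4 * Real.pi * p)) ^ (2 * m + 1 / 2 : ℝ) * (1 / (4 * Real.pi * q)) ^ (2 * m + 1 / 2 : ℝ)) * Real.Gamma (2 * m + 1 / 2) ^ 2 * (X ^ (2 * m) * (4 * Real.sqrt (p * q))) := by ring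
    _ = _ := by
      rw [h1, h2, Cm]
      have : 0 < Real.sqrt (p * q) := by positivity
      field_simp

theorem lint_VmVm (α : ℝ) {Φ : ℂ × ℂ → ℝ≥0∞} (hΦ : Measurable Φ) :
    ∫⁻ z, Φ z ∂((Vm α).prod (Vm α)) = ∫⁻ y1 in Ioi (0:ℝ), ENNReal.ofReal (y1 ^ α) * ∫⁻ y2 in Ioi (0:ℝ), ENNReal.ofReal (y2 ^ α) * ∫⁻ x1 : ℝ, ∫⁻ x2 : ℝ, Φ (x1 + y1 * Complex.I, x2 + y2 * Complex.I) := by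
  have hsf : SFinite (Vm α) := by unfold Vm; infer_instance
  rw [lintegral_prod _ hΦ.aemeasurable, lint_Vm α (Measurable.lintegral_prod_right' hΦ)]
  refine lintegral_congr fun y1 => ?_
  congr 1
  have hm3 : Measurable (fun q : (ℝ × ℝ) × ℝ => Φ (q.1.1 + y1 * Complex.I, q.2 + q.1.2 * Complex.I)) :=
    hΦ.comp (show Measurable (fun q : (ℝ × ℝ) × ℝ => ((q.1.1 + y1 * Complex.I, q.2 + q.1.2 * Complex.I) : ℂ × ℂ)) by fun_prop)
  have hm4 : Measurable (fun q : ℝ × ℝ => ∫⁻ x2 : ℝ, Φ (q.1 + y1 * Complex.I, x2 + q.2 * Complex.I)) :=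
    hm3.lintegral_prod_right'
  have hwm : Measurable (fun y : ℝ => ENNReal.ofReal (y ^ α)) := by fun_prop
  have h6 : ∀ x1 : ℝ, ∫⁻ z2, Φ (x1 + y1 * Complex.I, z2) ∂(Vm α) = ∫⁻ y2 in Ioi (0:ℝ), ENNReal.ofReal (y2 ^ α) * ∫⁻ x2 : ℝ, Φ (x1 + y1 * Complex.I, x2 + y2 * Complex.I) :=
    fun x1 => lint_Vm α (φ := fun z2 => Φ (x1 + y1 * Complex.I, z2)) (hΦ.comp measurable_prodMk_left)
  simp only [h6]
  rw [lintegral_lintegral_swap]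
  · refine lintegral_congr fun y2 => ?_
    rw [lintegral_const_mul' _ _ (by simp)]
  · exact ((hwm.comp measurable_snd).mul hm4).aemeasurable

set_option maxHeartbeats 1000000 in
theorem bergman_Lap {f : (Fin 3 → ℝ) → ℂ} (hf : Adm f) (m : ℕ) (hg : Adm (fun ξ => (qf ξ : ℂ) ^ m * f ξ)) :
    bergNormSqProd (2 * m - 1 / 2) (2 * m - 1 / 2) (fun p => Lap (fun ξ => (qf ξ : ℂ) ^ m * f ξ) ![p.1, p.2, 0]) ≤
      ENNReal.ofReal (Cm m) * ∫⁻ ξ, ‖f ξ‖ₑ ^ 2 := by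
  set g : (Fin 3 → ℝ) → ℂ := fun ξ => (qf ξ : ℂ) ^ m * f ξ with hgd
  set a : ℝ := 2 * m + 1 / 2 with ha
  have ha0 : 0 < a := by positivity
  have haα : (2 * m - 1 / 2 : ℝ) = a - 1 := by rw [ha]; ring
  rw [haα]
  have hmG : Measurable (fun p : ℂ × ℂ => ‖Lap g ![p.1, p.2, 0]‖ₑ ^ 2) := by
    have : Measurable (fun p : ℂ × ℂ => (![p.1, p.2, 0] : Fin 3 → ℂ)) := by
      rw [measurable_pi_iff]
      intro i
      fin_cases i <;> simp <;> fun_prop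
    exact ((Lap_meas hg.meas).comp this).enorm.pow_const 2
  set w : ℝ → ℝ≥0∞ := fun y => ENNReal.ofReal (y ^ (a - 1)) with hw
  have hwm : Measurable w := by rw [hw]; fun_prop
  have hhm : Measurable (hh g) := hh_meas hg.meas
  set E : ℝ → ℝ → ℝ≥0∞ := fun s y => ENNReal.ofReal (Real.exp (-(4 * Real.pi * s * y))) with hE
  calc bergNormSqProd (a - 1) (a - 1) (fun p => Lap g ![p.1, p.2, 0])
      = ∫⁻ y1 in Ioi (0:ℝ), w y1 * ∫⁻ y2 in Ioi (0:ℝ), w y2 * ∫⁻ x1 : ℝ, ∫⁻ x2 : ℝ, ‖Lap g ![x1 + y1 * Complex.I, x2 + y2 * Complex.I, 0]‖ₑ ^ 2 := by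
        rw [bergNormSqProd]
        exact lint_VmVm (a - 1) hmG
    _ ≤ ∫⁻ y1 in Ioi (0:ℝ), w y1 * ∫⁻ y2 in Ioi (0:ℝ), w y2 * ∫⁻ ξ : Fin 2 → ℝ, E (ξ 0) y1 * E (ξ 1) y2 * ‖hh g ξ‖ₑ ^ 2 := by
        refine setLIntegral_mono' measurableSet_Ioi (fun y1 h1 => ?_)
        refine mul_le_mul_right ?_ _
        refine setLIntegral_mono' measurableSet_Ioi (fun y2 h2 => ?_)
        refine mul_le_mul_right ?_ _
        exact slice_bound hg h1 h2
    _ = ∫⁻ y1 in Ioi (0:ℝ), w y1 * ∫⁻ ξ : Fin 2 → ℝ, E (ξ 0) y1 * (∫⁻ y2 in Ioi (0:ℝ), w y2 * E (ξ 1) y2) * ‖hh g ξ‖ₑ ^ 2 := by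
        congr 1; ext y1
        congr 1
        have : ∀ y2, w y2 * ∫⁻ ξ : Fin 2 → ℝ, E (ξ 0) y1 * E (ξ 1) y2 * ‖hh g ξ‖ₑ ^ 2 = ∫⁻ ξ : Fin 2 → ℝ, w y2 * (E (ξ 0) y1 * E (ξ 1) y2 * ‖hh g ξ‖ₑ ^ 2) := by
          intro y2
          rw [lintegral_const_mul' _ _ (by simp [hw])]
        simp only [this]
        rw [lintegral_lintegral_swap]
        · congr 1; ext ξ
          have : ∀ y2, w y2 * (E (ξ 0) y1 * E (ξ 1) y2 * ‖hh g ξ‖ₑ ^ 2) = (E (ξ 0) y1 * ‖hh g ξ‖ₑ ^ 2) * (w y2 * E (ξ 1) y2) := by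
            intro y2; ring
          simp only [this]
          rw [lintegral_const_mul' _ _ (ENNReal.mul_ne_top (by simp [hE]) (by simp))]
          ring
        · simp only [hE]
          apply Measurable.aemeasurable
          fun_prop
    _ = ∫⁻ ξ : Fin 2 → ℝ, (∫⁻ y1 in Ioi (0:ℝ), w y1 * E (ξ 0) y1) * (∫⁻ y2 in Ioi (0:ℝ), w y2 * E (ξ 1) y2) * ‖hh g ξ‖ₑ ^ 2 := by
        set J : ℝ → ℝ≥0∞ := fun s => ∫⁻ y2 in Ioi (0:ℝ), w y2 * E s y2 with hJ
        have hJm : Measurable J := by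
          refine Measurable.lintegral_prod_right' (f := fun (q : ℝ × ℝ) => w q.2 * E q.1 q.2) ?_
          simp only [hE]
          fun_prop
        have : ∀ y1, w y1 * ∫⁻ ξ : Fin 2 → ℝ, E (ξ 0) y1 * J (ξ 1) * ‖hh g ξ‖ₑ ^ 2 = ∫⁻ ξ : Fin 2 → ℝ, w y1 * (E (ξ 0) y1 * J (ξ 1) * ‖hh g ξ‖ₑ ^ 2) := by
          intro y2
          rw [lintegral_const_mul' _ _ (by simp [hw])]
        change ∫⁻ y1 in Ioi (0:ℝ), w y1 * ∫⁻ ξ : Fin 2 → ℝ, E (ξ 0) y1 * J (ξ 1) * ‖hh g ξ‖ₑ ^ 2 = ∫⁻ ξ : Fin 2 → ℝ, J (ξ 0) * J (ξ 1) * ‖hh g ξ‖ₑ ^ 2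
        simp only [this]
        rw [lintegral_lintegral_swap]
        · congr 1; ext ξ
          have h5 : ∀ y1, w y1 * (E (ξ 0) y1 * J (ξ 1) * ‖hh g ξ‖ₑ ^ 2) = (J (ξ 1) * ‖hh g ξ‖ₑ ^ 2) * (w y1 * E (ξ 0) y1) := by
            intro y2; ring
          simp only [h5]
          have hEm : Measurable (fun y1 => w y1 * E (ξ 0) y1) := by simp only [hE]; fun_prop
          rw [lintegral_const_mul _ hEm]
          change _ * J (ξ 0) = _
          ring
        · simp only [hE]
          apply Measurable.aemeasurable
          fun_prop
    _ ≤ ∫⁻ ξ : Fin 2 → ℝ, ENNReal.ofReal (Cm m) * ∫⁻ t, ‖f (v3 ξ t)‖ₑ ^ 2 := by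
        refine lintegral_mono fun ξ => ?_
        by_cases h : ξ 0 ≤ 0 ∨ ξ 1 ≤ 0
        · simp only [hgd, hh_zero hf m h]; simp
        push Not at h
        obtain ⟨h0, h1⟩ := h
        have hJ : ∀ s, 0 < s → ∫⁻ y in Ioi (0:ℝ), w y * E s y = ENNReal.ofReal ((1 / (4 * Real.pi * s)) ^ a * Real.Gamma a) := fun s hs =>
          ofReal_gamma ha0 (by positivity)
        have hGa := Real.Gamma_pos_of_pos ha0
        rw [hJ _ h0, hJ _ h1]
        refine (mul_le_mul_right (hh_bound hf m h0 h1) _).trans (le_of_eq ?_)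
        rw [← mul_assoc, ← ENNReal.ofReal_mul (by positivity), ← ENNReal.ofReal_mul (by positivity), const_calc m h0 h1]
    _ = ENNReal.ofReal (Cm m) * ∫⁻ ξ, ‖f ξ‖ₑ ^ 2 := by
        rw [lintegral_const_mul' _ _ (by simp)]
        congr 1
        have hfm : Measurable (fun ξ => ‖f ξ‖ₑ ^ 2) := hf.meas.enorm.pow_const 2
        rw [← e3_mp.lintegral_comp hfm]
        simp only [e3_apply]
        exact (lintegral_prod (fun p : (Fin 2 → ℝ) × ℝ => ‖f (v3 p.1 p.2)‖ₑ ^ 2) (hfm.comp v3_meas).aemeasurable).symm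

/-! ### parametric derivatives -/

theorem pd_par {U : Set ((Fin 3 → ℂ) × ℂ)} (hU : IsOpen U) {G : ℂ → (Fin 3 → ℂ) → ℂ} {K : (Fin 3 → ℂ) × ℂ → ℂ}
    (hK : ContDiffOn ℂ ∞ K U) (h : ∀ p ∈ U, G p.2 p.1 = K p) (i : Fin 3) :
    ∃ L : (Fin 3 → ℂ) × ℂ → ℂ, ContDiffOn ℂ ∞ L U ∧ ∀ p ∈ U, pd i (G p.2) p.1 = L p := by
  refine ⟨fun p => fderiv ℂ K p (Pi.single i 1, 0), ?_, ?_⟩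
  · exact (hK.fderiv_of_isOpen hU (m := ∞) (by simp)).clm_apply contDiffOn_const
  · rintro ⟨z, ε⟩ hp
    simp only [pd]
    have hd : HasFDerivAt K (fderiv ℂ K (z, ε)) (z, ε) :=
      ((hK.contDiffAt (hU.mem_nhds hp)).differentiableAt (by simp)).hasFDerivAt
    have hm : HasFDerivAt (fun w : Fin 3 → ℂ => (w, ε)) (ContinuousLinearMap.inl ℂ (Fin 3 → ℂ) ℂ) z :=
      hasFDerivAt_prodMk_left z ε
    have hc := HasFDerivAt.comp z (g := K) (f := fun w : Fin 3 → ℂ => (w, ε)) hd hm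
    have he : G ε =ᶠ[nhds z] (K ∘ fun w : Fin 3 → ℂ => (w, ε)) := by
      have : ∀ᶠ w in nhds z, (w, ε) ∈ U :=
        (Continuous.prodMk_left ε).continuousAt.eventually_mem (hU.mem_nhds hp)
      filter_upwards [this] with w hw using h _ hw
    rw [he.fderiv_eq, hc.fderiv]
    simp

theorem box_par {U : Set ((Fin 3 → ℂ) × ℂ)} (hU : IsOpen U) {G : ℂ → (Fin 3 → ℂ) → ℂ} {K : (Fin 3 → ℂ) × ℂ → ℂ}
    (hK : ContDiffOn ℂ ∞ K U) (h : ∀ p ∈ U, G p.2 p.1 = K p) :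
    ∃ L : (Fin 3 → ℂ) × ℂ → ℂ, ContDiffOn ℂ ∞ L U ∧ ∀ p ∈ U, BoxS (G p.2) p.1 = L p := by
  obtain ⟨L1, hL1, e1⟩ := pd_par hU hK h 1
  obtain ⟨L2, hL2, e2⟩ := pd_par hU hK h 2
  obtain ⟨L01, hL01, e01⟩ := pd_par hU (G := fun ε => pd 1 (G ε)) hL1 e1 0
  obtain ⟨L22, hL22, e22⟩ := pd_par hU (G := fun ε => pd 2 (G ε)) hL2 e2 2
  refine ⟨fun p => -4 * L01 p + L22 p, (contDiffOn_const.mul hL01).add hL22, fun p hp => ?_⟩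
  simp only [BoxS]
  rw [← e01 p hp, ← e22 p hp]

theorem box_iter_par {U : Set ((Fin 3 → ℂ) × ℂ)} (hU : IsOpen U) {G : ℂ → (Fin 3 → ℂ) → ℂ} {K : (Fin 3 → ℂ) × ℂ → ℂ}
    (hK : ContDiffOn ℂ ∞ K U) (h : ∀ p ∈ U, G p.2 p.1 = K p) (m : ℕ) :
    ∃ L : (Fin 3 → ℂ) × ℂ → ℂ, ContDiffOn ℂ ∞ L U ∧ ∀ p ∈ U, BoxS^[m] (G p.2) p.1 = L p := by
  induction m with
  | zero => exact ⟨K, hK, h⟩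
  | succ k ih =>
    obtain ⟨L, hL, e⟩ := ih
    obtain ⟨L', hL', e'⟩ := box_par hU (G := fun ε => BoxS^[k] (G ε)) hL e
    refine ⟨L', hL', fun p hp => ?_⟩
    rw [Function.iterate_succ_apply']
    exact e' p hp

/-! ### the regularizing factor -/

def dn (p : (Fin 3 → ℂ) × ℂ) : ℂ :=
  (1 - Complex.I * p.2 * p.1 0) * (1 - Complex.I * p.2 * p.1 1) * (1 - Complex.I * p.2 * (p.1 0 + p.1 1 + p.1 2))

theorem dn_contDiff : ContDiff ℂ ∞ dn := by
  unfold dn; fun_prop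

theorem fac_sq {ε : ℝ} (hε : 0 ≤ ε) {w : ℂ} (hw : 0 < w.im) :
    1 + (ε * w.re) ^ 2 ≤ ‖1 - Complex.I * ε * w‖ ^ 2 := by
  rw [← Complex.normSq_eq_norm_sq, Complex.normSq_apply]
  simp
  have : 0 ≤ ε * w.im := by positivity
  nlinarith

theorem sig_sum {y : Fin 3 → ℝ} (hy : y ∈ Sigma3) : 0 < y 0 + y 1 + y 2 := by
  have h1 := sig_pos1 hy
  obtain ⟨h2, h0⟩ := hy
  by_contra hc
  push Not at hc
  nlinarith [sq_nonneg (y 0 - y 1)]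

theorem dn_sq {ε : ℝ} (hε : 0 ≤ ε) {x y : Fin 3 → ℝ} (hy : y ∈ Sigma3) :
    (1 + (ε * x 0) ^ 2) * (1 + (ε * x 1) ^ 2) * (1 + (ε * (x 0 + x 1 + x 2)) ^ 2) ≤ ‖dn (cz x y, (ε : ℂ))‖ ^ 2 := by
  have h1 := sig_pos1 hy
  have hs := sig_sum hy
  obtain ⟨h2, h0⟩ := hy
  rw [dn, norm_mul, norm_mul, mul_pow (_ * _) ‖_‖ 2, mul_pow ‖_‖ ‖_‖ 2]
  have a := fac_sq hε (w := cz x y 0) (by simpa [cz] using h0)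
  have b := fac_sq hε (w := cz x y 1) (by simpa [cz] using h1)
  have c := fac_sq hε (w := cz x y 0 + cz x y 1 + cz x y 2) (by simpa [cz] using hs)
  simp only [cz, Complex.add_re, Complex.ofReal_re, Complex.re_ofReal_mul, Complex.I_re, mul_zero, add_zero] at a b c
  simp only [cz]
  exact mul_le_mul (mul_le_mul a b (by positivity) (by positivity)) c (by positivity) (by positivity)

theorem dn_one_le {ε : ℝ} (hε : 0 ≤ ε) {x y : Fin 3 → ℝ} (hy : y ∈ Sigma3) : 1 ≤ ‖dn (cz x y, (ε : ℂ))‖ := by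
  have h := dn_sq hε (x := x) hy
  have h1 : (1:ℝ) ≤ (1 + (ε * x 0) ^ 2) * (1 + (ε * x 1) ^ 2) * (1 + (ε * (x 0 + x 1 + x 2)) ^ 2) := by
    have a : (1:ℝ) ≤ 1 + (ε * x 0) ^ 2 := by nlinarith [sq_nonneg (ε * x 0)]
    have b : (1:ℝ) ≤ 1 + (ε * x 1) ^ 2 := by nlinarith [sq_nonneg (ε * x 1)]
    have c : (1:ℝ) ≤ 1 + (ε * (x 0 + x 1 + x 2)) ^ 2 := by nlinarith [sq_nonneg (ε * (x 0 + x 1 + x 2))]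
    exact one_le_mul_of_one_le_of_one_le (one_le_mul_of_one_le_of_one_le a b) c
  by_contra hc
  push Not at hc
  nlinarith [norm_nonneg (dn (cz x y, (ε : ℂ)))]

theorem tsig_cz {z : Fin 3 → ℂ} (hz : z ∈ TSigma) : ∃ x y, y ∈ Sigma3 ∧ z = cz x y :=
  ⟨fun i => (z i).re, fun i => (z i).im, hz, by ext i; simp [cz]⟩

theorem dn_ne {ε : ℝ} (hε : 0 ≤ ε) {z : Fin 3 → ℂ} (hz : z ∈ TSigma) : dn (z, (ε : ℂ)) ≠ 0 := by
  obtain ⟨x, y, hy, rfl⟩ := tsig_cz hz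
  have := dn_one_le hε (x := x) hy
  intro h
  rw [h] at this
  simp at this
  linarith

def phi (p : (Fin 3 → ℂ) × ℂ) : ℂ := (dn p ^ 2)⁻¹

theorem phi_le_one {ε : ℝ} (hε : 0 ≤ ε) {x y : Fin 3 → ℝ} (hy : y ∈ Sigma3) : ‖phi (cz x y, (ε : ℂ))‖ ≤ 1 := by
  have h := dn_one_le hε (x := x) hy
  rw [phi, norm_inv, norm_pow]
  apply inv_le_one_of_one_le₀
  exact one_le_pow₀ h

theorem phi_sq {ε : ℝ} (hε : 0 ≤ ε) {x y : Fin 3 → ℝ} (hy : y ∈ Sigma3) :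
    ‖phi (cz x y, (ε : ℂ))‖ ^ 2 ≤ 3 * ∏ i, (1 + (ε * x i) ^ 2)⁻¹ := by
  have h := dn_sq hε (x := x) hy
  have hd := dn_one_le hε (x := x) hy
  set a := (ε * x 0) ^ 2 with ha
  set b := (ε * x 1) ^ 2 with hb
  set c := (ε * (x 0 + x 1 + x 2)) ^ 2 with hc
  set d := (ε * x 2) ^ 2 with hdd
  have ha0 : 0 ≤ a := sq_nonneg _
  have hb0 : 0 ≤ b := sq_nonneg _
  have hc0 : 0 ≤ c := sq_nonneg _
  have hd0 : 0 ≤ d := sq_nonneg _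
  have hP : 1 + d ≤ 3 * ((1 + a) * (1 + b) * (1 + c)) := by
    have h1 : d ≤ 3 * (a + b + c) := by
      rw [ha, hb, hc, hdd]
      nlinarith [sq_nonneg (ε * x 0 - ε * x 1), sq_nonneg (ε * (x 0 + x 1 + x 2) + ε * x 0), sq_nonneg (ε * (x 0 + x 1 + x 2) + ε * x 1)]
    have h2 : 0 ≤ a * b := by positivity
    have h3 : 0 ≤ a * c := by positivity
    have h4 : 0 ≤ b * c := by positivity
    have h5 : 0 ≤ a * b * c := by positivity
    nlinarith
  set T := (1 + a) * (1 + b) * (1 + c) with hT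
  have hT0 : 0 < T := by positivity
  have hT1 : (1 + a) * (1 + b) ≤ T := by rw [hT]; nlinarith [mul_nonneg (show 0 ≤ (1 + a) * (1 + b) by positivity) hc0]
  have hTT : T * T ≤ (‖dn (cz x y, (ε : ℂ))‖ ^ 2) ^ 2 := by
    rw [pow_two (‖dn (cz x y, (ε : ℂ))‖ ^ 2)]; gcongr
  rw [phi, norm_inv, norm_pow, inv_pow, Fin.prod_univ_three, ← mul_inv, ← mul_inv]
  rw [inv_le_comm₀ (by positivity) (by positivity)]
  rw [mul_inv, inv_inv]
  refine le_trans ?_ hTT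
  have : (1 + a) * (1 + b) * (1 + d) ≤ T * (3 * T) := by gcongr
  linarith

theorem enn_mul_le (a b : ℝ≥0∞) : a * b ≤ a ^ 2 + b ^ 2 := by
  rcases le_total a b with h | h
  · calc a * b ≤ b * b := by gcongr
      _ = b ^ 2 := (sq b).symm
      _ ≤ _ := le_add_self
  · calc a * b ≤ a * a := by gcongr
      _ = a ^ 2 := (sq a).symm
      _ ≤ _ := le_self_add

theorem phi_int {ε : ℝ} (hε : 0 < ε) : ∃ K : ℝ≥0∞, K ≠ ⊤ ∧ ∀ y ∈ Sigma3, ∫⁻ x, ‖phi (cz x y, (ε : ℂ))‖ₑ ^ 2 ≤ K := by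
  have h1 : Integrable (fun t : ℝ => (1 + (ε * t) ^ 2)⁻¹) := integrable_inv_one_add_sq.comp_mul_left' hε.ne'
  have h2 := (Integrable.fintype_prod (f := fun (_ : Fin 3) (t : ℝ) => (1 + (ε * t) ^ 2)⁻¹) (fun _ => h1)).const_mul 3
  refine ⟨∫⁻ x : Fin 3 → ℝ, ENNReal.ofReal (3 * ∏ i, (1 + (ε * x i) ^ 2)⁻¹), ?_, fun y hy => ?_⟩
  · exact (h2.lintegral_lt_top).ne
  · refine lintegral_mono fun x => ?_
    rw [← ofReal_norm, ← ENNReal.ofReal_pow (norm_nonneg _)]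
    exact ENNReal.ofReal_le_ofReal (phi_sq hε.le hy)

theorem hardy_slice (F : (Fin 3 → ℂ) → ℂ) {y : Fin 3 → ℝ} (hy : y ∈ Sigma3) :
    ∫⁻ x, ‖F (cz x y)‖ₑ ^ 2 ≤ hardyNormSqSigma F := by
  unfold hardyNormSqSigma
  exact le_iSup₂ (f := fun (y : Fin 3 → ℝ) (_ : y ∈ Sigma3) => ∫⁻ x, ‖F (cz x y)‖ₑ ^ 2) y hy

theorem reg_repr {F : (Fin 3 → ℂ) → ℂ} (hF : DifferentiableOn ℂ F TSigma) (hN : hardyNormSqSigma F < ⊤) {ε : ℝ} (hε : 0 < ε) :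
    ∃ f, Adm f ∧ EqOn (fun z => F z * phi (z, (ε : ℂ))) (Lap f) TSigma ∧ ∫⁻ ξ, ‖f ξ‖ₑ ^ 2 ≤ hardyNormSqSigma F := by
  obtain ⟨K, hK, hKb⟩ := phi_int hε
  have hphi : DifferentiableOn ℂ (fun z => phi (z, (ε : ℂ))) TSigma := by
    unfold phi
    apply DifferentiableOn.inv
    · have : Differentiable ℂ dn := dn_contDiff.differentiable (by simp)
      apply Differentiable.differentiableOn
      exact (this.comp (differentiable_id.prodMk (differentiable_const _))).pow 2
    · intro z hz
      exact pow_ne_zero 2 (dn_ne hε.le hz)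
  have hd : DifferentiableOn ℂ (fun z => F z * phi (z, (ε : ℂ))) TSigma := hF.mul hphi
  obtain ⟨f, hf, he, hL⟩ := repr_thm hd (M := hardyNormSqSigma F + K) (ENNReal.add_ne_top.2 ⟨hN.ne, hK⟩) (by
    intro y hy
    calc ∫⁻ x, ‖F (cz x y) * phi (cz x y, (ε : ℂ))‖ₑ ≤ ∫⁻ x, (‖F (cz x y)‖ₑ ^ 2 + ‖phi (cz x y, (ε : ℂ))‖ₑ ^ 2) := by
          refine lintegral_mono fun x => ?_
          rw [enorm_mul]
          exact enn_mul_le _ _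
      _ = (∫⁻ x, ‖F (cz x y)‖ₑ ^ 2) + ∫⁻ x, ‖phi (cz x y, (ε : ℂ))‖ₑ ^ 2 := 
          lintegral_add_left ((slice_cont hF.continuousOn hy).measurable.enorm.pow_const 2) _
      _ ≤ _ := add_le_add (hardy_slice F hy) (hKb y hy))
  refine ⟨f, hf, he, repr_L2 hf fun y hy => (hL y hy).trans ((lintegral_mono fun x => ?_).trans (hardy_slice F hy))⟩
  rw [enorm_mul]
  have : ‖phi (cz x y, (ε : ℂ))‖ₑ ≤ 1 := by
    rw [← ofReal_norm]
    simpa using ENNReal.ofReal_le_ofReal (phi_le_one hε.le (x := x) hy)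
  gcongr
  exact mul_le_of_le_one_right' this

theorem F_smooth {F : (Fin 3 → ℂ) → ℂ} (hF : DifferentiableOn ℂ F TSigma) (hN : hardyNormSqSigma F < ⊤) :
    ContDiffOn ℂ ∞ F TSigma := by
  obtain ⟨f, hf, he, -⟩ := reg_repr hF hN one_pos
  have h1 : ContDiffOn ℂ ∞ (fun z => Lap f z * dn (z, ((1:ℝ) : ℂ)) ^ 2) TSigma := by
    refine (Lap_contDiffOn hf).mul ?_
    exact ((dn_contDiff.comp (contDiff_id.prodMk contDiff_const)).pow 2).contDiffOn
  refine h1.congr fun z hz => ?_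
  rw [← he hz]
  simp only [phi]
  have := dn_ne zero_le_one hz
  field_simp

theorem ae_UHP (α β : ℝ) : ∀ᵐ p ∂((Vm α).prod (Vm β)), p.1 ∈ UHP ∧ p.2 ∈ UHP := by
  have hsf : ∀ α, SFinite (Vm α) := fun α => by unfold Vm; infer_instance
  have h : ∀ α, ∀ᵐ z ∂(Vm α), z ∈ UHP := fun α =>
    (withDensity_absolutelyContinuous _ _).ae_le (ae_restrict_mem UHP_meas)
  have := hsf α
  have := hsf β
  filter_upwards [Measure.quasiMeasurePreserving_fst.ae (h α), Measure.quasiMeasurePreserving_snd.ae (h β)] with p h1 h2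
  exact ⟨h1, h2⟩

theorem main_bound (m : ℕ) {F : (Fin 3 → ℂ) → ℂ} (hF : DifferentiableOn ℂ F TSigma) (hN : hardyNormSqSigma F < ⊤) :
    DifferentiableOn ℂ (fun p : ℂ × ℂ => BoxS^[m] F ![p.1, p.2, 0]) (UHP ×ˢ UHP) ∧
        bergNormSqProd (2 * m - 1 / 2) (2 * m - 1 / 2)
            (fun p : ℂ × ℂ => BoxS^[m] F ![p.1, p.2, 0]) ≤
          ENNReal.ofReal (Cm m) * hardyNormSqSigma F := by
  set U : Set ((Fin 3 → ℂ) × ℂ) := {p | p.1 ∈ TSigma ∧ dn p ≠ 0} with hUd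
  have hU : IsOpen U := (tsig_open.preimage continuous_fst).inter (isOpen_ne_fun dn_contDiff.continuous continuous_const)
  set G : ℂ → (Fin 3 → ℂ) → ℂ := fun ε z => F z * phi (z, ε) with hG
  have hK : ContDiffOn ℂ ∞ (fun p : (Fin 3 → ℂ) × ℂ => F p.1 * phi p) U := by
    refine ((F_smooth hF hN).comp contDiff_fst.contDiffOn (fun p hp => hp.1)).mul ?_
    unfold phi
    exact (dn_contDiff.pow 2).contDiffOn.inv (fun p hp => pow_ne_zero 2 hp.2)
  obtain ⟨L, hL, hLe⟩ := box_iter_par hU (G := G) hK (fun p hp => rfl) m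
  have hG0 : G 0 = F := by
    funext z
    simp [hG, phi, dn]
  have hmemU : ∀ ε : ℝ, 0 ≤ ε → ∀ z ∈ TSigma, (z, (ε : ℂ)) ∈ U := fun ε hε z hz => ⟨hz, dn_ne hε hz⟩
  have hmem0 : ∀ z ∈ TSigma, (z, (0 : ℂ)) ∈ U := fun z hz => by simpa using hmemU 0 le_rfl z hz
  have hF0 : ∀ z ∈ TSigma, BoxS^[m] F z = L (z, 0) := by
    intro z hz
    have := hLe (z, 0) (hmem0 z hz)
    simpa [hG0] using this
  constructor
  · have hd : DifferentiableOn ℂ (fun p : ℂ × ℂ => L ((![p.1, p.2, 0] : Fin 3 → ℂ), (0:ℂ))) (UHP ×ˢ UHP) := by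
      have hv : Differentiable ℂ (fun p : ℂ × ℂ => ((![p.1, p.2, 0] : Fin 3 → ℂ), (0:ℂ))) := by
        apply Differentiable.prodMk _ (differentiable_const _)
        rw [differentiable_pi]
        intro i
        fin_cases i <;> simp <;> fun_prop
      exact (hL.differentiableOn (by simp)).comp hv.differentiableOn (fun p hp => hmem0 _ (pair_mem hp.1 hp.2))
    exact hd.congr fun p hp => hF0 _ (pair_mem hp.1 hp.2)
  · set e : ℕ → ℝ := fun n => 1 / ((n : ℝ) + 1) with he
    have he0 : ∀ n, 0 < e n := fun n => by simp only [he]; positivity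
    choose f hf hfe hfN using fun n => reg_repr hF hN (he0 n)
    have hbox := fun n => box_iter_Lap (hf n) (F := G (e n)) (hfe n) m
    set Φ : ℕ → ℂ × ℂ → ℂ := fun n p => Lap (fun ξ => (qf ξ : ℂ) ^ m * f n ξ) ![p.1, p.2, 0] with hΦ
    have hΦm : ∀ n, Measurable (fun p => ‖Φ n p‖ₑ ^ 2) := by
      intro n
      have : Measurable (fun p : ℂ × ℂ => (![p.1, p.2, 0] : Fin 3 → ℂ)) := by
        rw [measurable_pi_iff]
        intro i
        fin_cases i <;> simp <;> fun_prop
      exact ((Lap_meas (hbox n).1.meas).comp this).enorm.pow_const 2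
    have hlim : ∀ p : ℂ × ℂ, p.1 ∈ UHP → p.2 ∈ UHP →
        Filter.Tendsto (fun n => ‖Φ n p‖ₑ ^ 2) Filter.atTop (nhds (‖BoxS^[m] F ![p.1, p.2, 0]‖ₑ ^ 2)) := by
      intro p h1 h2
      have hz := pair_mem h1 h2
      have hΦe : ∀ n, Φ n p = L (![p.1, p.2, 0], ((e n : ℝ) : ℂ)) := by
        intro n
        rw [hΦ]
        simp only
        rw [← (hbox n).2 hz]
        exact hLe (![p.1, p.2, 0], ((e n : ℝ) : ℂ)) (hmemU _ (he0 n).le _ hz)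
      rw [hF0 _ hz]
      simp only [hΦe]
      have hc : ContinuousAt L (![p.1, p.2, 0], 0) := hL.continuousOn.continuousAt (hU.mem_nhds (hmem0 _ hz))
      have ht : Filter.Tendsto (fun n => ((![p.1, p.2, 0], ((e n : ℝ) : ℂ)) : (Fin 3 → ℂ) × ℂ)) Filter.atTop (nhds (![p.1, p.2, 0], 0)) := by
        apply Filter.Tendsto.prodMk_nhds tendsto_const_nhds
        have := (Complex.continuous_ofReal.tendsto 0).comp (tendsto_one_div_add_atTop_nhds_zero_nat (𝕜 := ℝ))
        simpa [Function.comp_def, he] using this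
      have h3 : Filter.Tendsto (fun n => L (![p.1, p.2, 0], ((e n : ℝ) : ℂ))) Filter.atTop (nhds (L (![p.1, p.2, 0], 0))) := hc.tendsto.comp ht
      exact ((ENNReal.continuous_pow 2).tendsto _).comp h3.enorm
    set μ := (Vm (2 * m - 1 / 2)).prod (Vm (2 * m - 1 / 2)) with hμ
    calc bergNormSqProd (2 * m - 1 / 2) (2 * m - 1 / 2) (fun p : ℂ × ℂ => BoxS^[m] F ![p.1, p.2, 0])
        = ∫⁻ p, ‖BoxS^[m] F ![p.1, p.2, 0]‖ₑ ^ 2 ∂μ := rfl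
      _ = ∫⁻ p, Filter.liminf (fun n => ‖Φ n p‖ₑ ^ 2) Filter.atTop ∂μ := by
          apply lintegral_congr_ae
          filter_upwards [ae_UHP (2 * m - 1 / 2) (2 * m - 1 / 2)] with p hp
          exact (hlim p hp.1 hp.2).liminf_eq.symm
      _ ≤ Filter.liminf (fun n => ∫⁻ p, ‖Φ n p‖ₑ ^ 2 ∂μ) Filter.atTop := lintegral_liminf_le hΦm
      _ ≤ _ := by
          refine Filter.liminf_le_of_le (by isBoundedDefault) ?_
          intro b hb
          obtain ⟨n, hn⟩ := hb.exists
          refine hn.trans ((bergman_Lap (hf n) m (hbox n).1).trans ?_)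
          gcongr
          exact hfN n

/-- there is `C_m > 0` such that for every `F ∈ H²(T_Σ)`, the restriction
`(z₁,z₂) ↦ (□^m F)(z₁,z₂,0)` belongs to `A²_{(2m−1/2,2m−1/2)}(Π⁺×Π⁺)` with
`‖R□^m F‖² ≤ C_m ‖F‖²_{H²(T_Σ)}`. -/
theorem restriction_bounded_into_bergman_prod (m : ℕ) :
    ∃ C : ℝ, 0 < C ∧
      ∀ F : (Fin 3 → ℂ) → ℂ, DifferentiableOn ℂ F TSigma → hardyNormSqSigma F < ⊤ →
        DifferentiableOn ℂ (fun p : ℂ × ℂ => BoxS^[m] F ![p.1, p.2, 0]) (UHP ×ˢ UHP) ∧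
        bergNormSqProd (2 * m - 1 / 2) (2 * m - 1 / 2)
            (fun p : ℂ × ℂ => BoxS^[m] F ![p.1, p.2, 0]) ≤
          ENNReal.ofReal C * hardyNormSqSigma F := by
  exact ⟨Cm m, Cm_pos m, fun _ hF hN => main_bound m hF hN⟩
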